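/- Let H be a finite simple graph with maximum degree Δ(H) ≥ 6 and clique number ω(H) ≤ Δ(H) − 1. Let k ≥ 1 and let p_1 ≥ p_2 ≥ … ≥ p_k ≥ 2 be positive integers with p_1 ≥ 4 and p_1 + p_2 + … + p_k = Δ(H) − 1 + k. Then there exists a partition of V(H) into sets V_1, V_2, …, V_k such that for each 1 ≤ i ≤ k the induced subgraph H[V_i] is K_{p_i}-free. -/

import Mathlib

/-!
Let `t = Δ(H)`. For `t ≥ 6` there is an independent set meeting all `(t - 1)`-cliques: the
`(t - 1)`-cliques fall into classes of mutually intersecting ones, by Hajnal's inequality each class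
has a common core, and King's version of Haxell's theorem provides an independent transversal of
the cores. Removing such a set, enlarged to a dominating one, lowers both the degree bound and the
clique bound by one. This leads down to maximum degree `6` without `6`-cliques, where we need two
independent sets whose removal destroys all `4`-cliques. The first one is found as before; for the
second one, the `4`-cliques in a graph of maximum degree `5` without `5`-cliques may form an odd
ring of pairs of vertices, in which any two consecutive pairs span a clique. Then each vertex of the
ring has just one neighbour outside. Deleting the ring and joining two of these neighbours by an
edge gives a smaller graph; the new edge makes both colours available somewhere on the ring, so that
a colouring of the smaller graph extends to the ring.

Altogether there are `Δ(H) - 4` independent sets whose complement contains no `4`-clique. The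
complement and `p₁ - 4` of these sets form the first part, and `pᵢ - 1` of them form each other one.
-/

namespace CliqueFreePartition

open Finset SimpleGraph
open scoped Classical

/-! ### Independent transversals -/

section Transversals

variable {V ι : Type*} {G G' : SimpleGraph V} {P Q : ι → Finset V} {S T : Finset ι}
  {A B : ι} {f : ι → V} {a b : V}

/-- `f` is an independent transversal of the vertex classes `P i`, `i ∈ S`: it selects one vertex
from each of them, and no two selected vertices are adjacent. The classes need not be disjoint. -/
structure IsIndepTransversal (G : SimpleGraph V) (P : ι → Finset V) (S : Finset ι)
    (f : ι → V) : Prop where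
  mem : ∀ i ∈ S, f i ∈ P i
  not_adj : ∀ i ∈ S, ∀ j ∈ S, ¬ G.Adj (f i) (f j)

namespace IsIndepTransversal

theorem anti (hf : IsIndepTransversal G P S f) (h : G' ≤ G) : IsIndepTransversal G' P S f :=
  ⟨hf.mem, fun i hi j hj hij => hf.not_adj i hi j hj (h hij)⟩

theorem update (hf : IsIndepTransversal G P (S.erase A) f) (ha : a ∈ P A)
    (hna : ∀ i ∈ S.erase A, ¬ G.Adj a (f i)) :
    IsIndepTransversal G P S (Function.update f A a) := by
  have split (i) (hi : i ∈ S) : i = A ∨ i ≠ A ∧ i ∈ S.erase A := by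
    by_cases h : i = A <;> simp [h, hi]
  constructor
  · intro i hi
    obtain rfl | ⟨hiA, hi⟩ := split i hi
    · simpa using ha
    · simpa [hiA] using hf.mem i hi
  · intro i hi j hj
    obtain rfl | ⟨hiA, hi⟩ := split i hi <;> obtain rfl | ⟨hjA, hj⟩ := split j hj
    · exact G.loopless.irrefl _
    · simpa [hjA] using hna j hj
    · simpa [hiA, G.adj_comm] using hna i hi
    · simpa [hiA, hjA] using hf.not_adj i hi j hj

theorem exists_adj (hf : IsIndepTransversal G P (S.erase A) f)
    (hS : ∀ g, ¬ IsIndepTransversal G P S g) (ha : a ∈ P A) : ∃ B ∈ S.erase A, G.Adj a (f B) := by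
  by_contra! h
  exact hS _ (hf.update ha h)

end IsIndepTransversal

/-- In an edge-minimal graph without an independent transversal, every edge `ab` between two
classes is the only edge spanned by some transversal. -/
theorem exists_transversal_unique_edge (hP : (S : Set ι).PairwiseDisjoint P)
    (hG : Minimal (fun G => ∀ f, ¬ IsIndepTransversal G P S f) G) (hab : G.Adj a b)
    (hA : A ∈ S) (hB : B ∈ S) (ha : a ∈ P A) (hb : b ∈ P B) :
    ∃ f : ι → V, f A = a ∧ f B = b ∧ (∀ i ∈ S, f i ∈ P i) ∧
      ∀ i ∈ S, ∀ j ∈ S, G.Adj (f i) (f j) → i = A ∧ j = B ∨ i = B ∧ j = A := by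
  have hlt : G.deleteEdges {s(a, b)} < G :=
    lt_of_le_not_ge (G.deleteEdges_le _) fun h => by simpa using h hab
  obtain ⟨f, hf⟩ : ∃ f, IsIndepTransversal (G.deleteEdges {s(a, b)}) P S f := by
    simpa using hG.not_prop_of_lt hlt
  have eq_ab (i) (hi : i ∈ S) (j) (hj : j ∈ S) (hij : G.Adj (f i) (f j)) :
      f i = a ∧ f j = b ∨ f i = b ∧ f j = a := by
    have := hf.not_adj i hi j hj
    simpa only [deleteEdges_adj, hij, true_and, Set.mem_singleton_iff, not_not, Sym2.eq_iff]
      using this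
  have class_eq (i) (hi : i ∈ S) (j) (hj : j ∈ S) (x) (hfx : f i = x) (hx : x ∈ P j) : i = j :=
    hP.elim_finset hi hj x (hfx ▸ hf.mem i hi) hx
  have unique (i) (hi : i ∈ S) (j) (hj : j ∈ S) (hij : G.Adj (f i) (f j)) :
      i = A ∧ j = B ∨ i = B ∧ j = A :=
    (eq_ab i hi j hj hij).imp
      (fun h => ⟨class_eq i hi A hA a h.1 ha, class_eq j hj B hB b h.2 hb⟩)
      (fun h => ⟨class_eq i hi B hB b h.1 hb, class_eq j hj A hA a h.2 ha⟩)
  obtain ⟨i, hi, j, hj, hij⟩ : ∃ i ∈ S, ∃ j ∈ S, G.Adj (f i) (f j) := by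
    by_contra! h
    exact hG.prop f ⟨hf.mem, h⟩
  obtain ⟨h₁, h₂⟩ | ⟨h₁, h₂⟩ := eq_ab i hi j hj hij
  · refine ⟨f, ?_, ?_, hf.mem, unique⟩
    · rwa [← class_eq i hi A hA a h₁ ha]
    · rwa [← class_eq j hj B hB b h₂ hb]
  · refine ⟨f, ?_, ?_, hf.mem, unique⟩
    · rwa [← class_eq j hj A hA a h₂ ha]
    · rwa [← class_eq i hi B hB b h₁ hb]

section Merge

/-- The classes `P A` and `P B` are merged into one, indexed by `A`, and the neighbours of `a` and
`b` are removed from all classes. The class indexed by `B` is meant to be dropped afterwards. -/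
noncomputable def mergeClasses (G : SimpleGraph V) (P : ι → Finset V) (A B : ι) (a b : V) (i : ι) :
    Finset V :=
  {v ∈ if i = A then P A ∪ P B else P i | ¬ G.Adj a v ∧ ¬ G.Adj b v}

theorem mem_mergeClasses {i : ι} {v : V} : v ∈ mergeClasses G P A B a b i ↔
    (v ∈ P i ∨ i = A ∧ v ∈ P B) ∧ ¬ G.Adj a v ∧ ¬ G.Adj b v := by
  by_cases h : i = A <;> simp [mergeClasses, h]

theorem pairwiseDisjoint_mergeClasses (hP : (S : Set ι).PairwiseDisjoint P) (hB : B ∈ S) :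
    ((S.erase B : Finset ι) : Set ι).PairwiseDisjoint (mergeClasses G P A B a b) := by
  intro i hi j hj hij
  simp only [coe_erase, Set.mem_sdiff, mem_coe, Set.mem_singleton_iff] at hi hj
  refine disjoint_left.2 fun v hvi hvj => ?_
  replace hvi := (mem_mergeClasses.1 hvi).1
  replace hvj := (mem_mergeClasses.1 hvj).1
  obtain hvi | ⟨rfl, hvi⟩ := hvi <;> obtain hvj | ⟨rfl, hvj⟩ := hvj
  · exact hij (hP.elim_finset hi.1 hj.1 v hvi hvj)
  · exact hi.2 (hP.elim_finset hi.1 hB v hvi hvj)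
  · exact hj.2 (hP.elim_finset hj.1 hB v hvj hvi)
  · exact hij rfl

theorem IsIndepTransversal.of_mergeClasses
    (hf : IsIndepTransversal G (mergeClasses G P A B a b) (S.erase B) f)
    (hA : A ∈ S) (hAB : A ≠ B) (ha : a ∈ P A) (hb : b ∈ P B) :
    ∃ g, IsIndepTransversal G P S g := by
  have hAS : A ∈ S.erase B := mem_erase.2 ⟨hAB, hA⟩
  have hna (i) (hi : i ∈ S.erase B) : ¬ G.Adj a (f i) ∧ ¬ G.Adj b (f i) :=
    (mem_mergeClasses.1 (hf.mem i hi)).2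
  have hmem (i) (hi : i ∈ S.erase B) (hiA : i ≠ A) : f i ∈ P i := by
    simpa [hiA] using (mem_mergeClasses.1 (hf.mem i hi)).1
  obtain hfA | ⟨-, hfA⟩ := (mem_mergeClasses.1 (hf.mem A hAS)).1
  · have hf' : IsIndepTransversal G P (S.erase B) f :=
      ⟨fun i hi => if h : i = A then h ▸ hfA else hmem i hi h, hf.not_adj⟩
    exact ⟨_, hf'.update hb fun i hi => (hna i hi).2⟩
  · have sub {i} (hi : i ∈ (S.erase A).erase B) : i ∈ S.erase B := by
      simp_all only [mem_erase, ne_eq, not_false_eq_true, and_self]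
    have hf' : IsIndepTransversal G P ((S.erase A).erase B) f :=
      ⟨fun i hi => hmem i (sub hi) (by simp_all only [mem_erase, ne_eq, not_false_eq_true]),
        fun i hi j hj => hf.not_adj i (sub hi) j (sub hj)⟩
    refine ⟨_, (hf'.update hfA fun i hi => hf.not_adj A hAS i (sub hi)).update ha fun i hi => ?_⟩
    by_cases hiB : i = B
    · simpa [hiB] using (hna A hAS).1
    · simpa [hiB] using (hna i (by simp_all)).1

/-- The set `D` obstructs the existence of an independent transversal of the classes indexed
by `S`: it dominates them although it has few elements. -/
structure IsHaxellObstruction (G : SimpleGraph V) (P : ι → Finset V) (S : Finset ι)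
    (D : Finset V) : Prop where
  card_add_two_le : #D + 2 ≤ 2 * #S
  exists_class : ∀ d ∈ D, ∃ i ∈ S, d ∈ P i
  dominates : ∀ i ∈ S, ∀ v ∈ P i, ∃ d ∈ D, G.Adj v d
  meets : 2 ≤ #S → ∀ i ∈ S, ∃ d ∈ D, d ∈ P i

theorem IsHaxellObstruction.of_mergeClasses {D : Finset V}
    (hD : IsHaxellObstruction G (mergeClasses G P A B a b) T D) (hA : A ∈ T) (hB : B ∉ T)
    (ha : a ∈ P A) (hb : b ∈ P B) :
    IsHaxellObstruction G P (insert B T) (insert a (insert b D)) where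
  card_add_two_le := by
    have := card_insert_le a (insert b D)
    have := card_insert_le b D
    have := hD.card_add_two_le
    rw [card_insert_of_notMem hB]
    lia
  exists_class d hd := by
    obtain rfl | rfl | hd := by simpa only [mem_insert] using hd
    · exact ⟨A, mem_insert_of_mem hA, ha⟩
    · exact ⟨B, mem_insert_self B T, hb⟩
    · obtain ⟨i, hi, hdi⟩ := hD.exists_class d hd
      obtain hdi | ⟨-, hdi⟩ := (mem_mergeClasses.1 hdi).1
      · exact ⟨i, mem_insert_of_mem hi, hdi⟩
      · exact ⟨B, mem_insert_self B T, hdi⟩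
  dominates i hi v hv := by
    by_cases hav : G.Adj a v
    · exact ⟨a, by simp, hav.symm⟩
    by_cases hbv : G.Adj b v
    · exact ⟨b, by simp, hbv.symm⟩
    obtain ⟨j, hj, hvj⟩ : ∃ j ∈ T, v ∈ mergeClasses G P A B a b j := by
      obtain rfl | hi := mem_insert.1 hi
      · exact ⟨A, hA, mem_mergeClasses.2 ⟨.inr ⟨rfl, hv⟩, hav, hbv⟩⟩
      · exact ⟨i, hi, mem_mergeClasses.2 ⟨.inl hv, hav, hbv⟩⟩
    obtain ⟨d, hd, hvd⟩ := hD.dominates j hj v hvj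
    exact ⟨d, by simp [hd], hvd⟩
  meets _ i hi := by
    by_cases hiA : i = A
    · exact ⟨a, by simp, hiA ▸ ha⟩
    obtain rfl | hi := mem_insert.1 hi
    · exact ⟨b, by simp, hb⟩
    have hT : 2 ≤ #T := one_lt_card.2 ⟨i, hi, A, hA, hiA⟩
    obtain ⟨d, hd, hdi⟩ := hD.meets hT i hi
    exact ⟨d, by simp [hd], by simpa [hiA] using (mem_mergeClasses.1 hdi).1⟩

/-- Passing to an edge-minimal subgraph provides an edge `ab` that is the only edge spanned by some
transversal; merging the classes of `a` and `b` then leaves an obstruction for fewer classes. -/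
theorem exists_isHaxellObstruction [Finite V] (hP : (S : Set ι).PairwiseDisjoint P) (hA : A ∈ S)
    (hf : IsIndepTransversal G P (S.erase A) f) (hS : ∀ g, ¬ IsIndepTransversal G P S g) :
    ∃ T ⊆ S, A ∈ T ∧ ∃ D, IsHaxellObstruction G P T D := by
  induction S using Finset.strongInduction generalizing G P f with
  | H S ih =>
    obtain hPA | ⟨a, ha⟩ := (P A).eq_empty_or_nonempty
    · exact ⟨{A}, by simpa using hA, mem_singleton_self A, ∅, by simp, by simp, by simp [hPA],
        by simp⟩
    obtain ⟨G', hG'G, hG'⟩ := exists_minimal_le_of_wellFoundedLT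
      (fun G => ∀ g, ¬ IsIndepTransversal G P S g) G hS
    obtain ⟨B, hBS, hab⟩ := (hf.anti hG'G).exists_adj hG'.prop ha
    obtain ⟨hBA, hB⟩ := mem_erase.1 hBS
    have hb : f B ∈ P B := hf.mem B hBS
    obtain ⟨g, hgA, hgB, hg, hgadj⟩ := exists_transversal_unique_edge hP hG' hab hA hB ha hb
    have hg' : IsIndepTransversal G' (mergeClasses G' P A B a (f B)) ((S.erase B).erase A) g := by
      have hnadj {i} (hi : i ∈ (S.erase B).erase A) (j) (hj : j ∈ S) : ¬ G'.Adj (g j) (g i) := by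
        simp only [mem_erase] at hi
        exact fun h => by obtain ⟨-, rfl⟩ | ⟨-, rfl⟩ := hgadj j hj i hi.2.2 h <;> simp_all
      have hmemS {i} (hi : i ∈ (S.erase B).erase A) : i ∈ S :=
        mem_of_mem_erase (mem_of_mem_erase hi)
      exact ⟨fun i hi => mem_mergeClasses.2
        ⟨.inl (hg i (hmemS hi)), hgA ▸ hnadj hi A hA, hgB ▸ hnadj hi B hB⟩,
        fun i hi j hj => hnadj hj i (hmemS hi)⟩
    obtain ⟨T, hTS, hAT, D, hD⟩ := ih (S.erase B) (erase_ssubset hB)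
      (pairwiseDisjoint_mergeClasses hP hB) (mem_erase.2 ⟨hBA.symm, hA⟩) hg' fun h hh =>
        (hh.of_mergeClasses hA hBA.symm ha hb).elim hG'.prop
    have hBT : B ∉ T := fun h => notMem_erase B S (hTS h)
    have hD' := hD.of_mergeClasses hAT hBT ha hb
    exact ⟨insert B T, insert_subset hB (hTS.trans (erase_subset B S)), mem_insert_of_mem hAT, _,
      { hD' with dominates := fun i hi v hv => (hD'.dominates i hi v hv).imp fun d hd =>
          ⟨hd.1, hG'G hd.2⟩ }⟩

theorem IsHaxellObstruction.sum_card_le [Fintype V] {D : Finset V}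
    (hD : IsHaxellObstruction G P S D) (hP : (S : Set ι).PairwiseDisjoint P) :
    ∑ i ∈ S, #(P i) ≤ ∑ d ∈ D, G.degree d := by
  rw [← card_biUnion hP]
  refine (card_le_card fun v hv => ?_).trans card_biUnion_le
  obtain ⟨i, hi, hvi⟩ := mem_biUnion.1 hv
  obtain ⟨d, hd, hvd⟩ := hD.dominates i hi v hvi
  exact mem_biUnion.2 ⟨d, hd, (G.mem_neighborFinset d v).2 hvd.symm⟩

/-- `D` contains a representative of every class; its remaining at most `#S - 2` elements have
degree at most `k`. -/
theorem IsHaxellObstruction.sum_degree_lt [Fintype V] {D : Finset V} {k : ℕ}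
    (hD : IsHaxellObstruction G P S D) (hP : (S : Set ι).PairwiseDisjoint P) (hS : 2 ≤ #S)
    (hk : 0 < k) (hdeg : ∀ i ∈ S, ∀ v ∈ P i, G.degree v ≤ k ∧ G.degree v + k ≤ #(P i)) :
    ∑ d ∈ D, G.degree d < ∑ i ∈ S, #(P i) := by
  have : Nonempty V :=
    let ⟨i, hi⟩ := card_pos.1 (Nat.zero_lt_of_lt hS)
    let ⟨d, _⟩ := hD.meets hS i hi
    ⟨d⟩
  choose! r hrD hrP using hD.meets hS
  have hinj : Set.InjOn r S := fun i hi j hj hij =>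
    hP.elim_finset hi hj (r i) (hrP i hi) (hij ▸ hrP j hj)
  have hsub : S.image r ⊆ D := image_subset_iff.2 hrD
  have hrest : ∑ d ∈ D \ S.image r, G.degree d ≤ #(D \ S.image r) * k := by
    refine sum_le_card_nsmul _ _ _ fun d hd => ?_
    obtain ⟨i, hi, hdi⟩ := hD.exists_class d (mem_sdiff.1 hd).1
    exact (hdeg i hi d hdi).1
  have hrep : ∑ i ∈ S, G.degree (r i) + #S * k ≤ ∑ i ∈ S, #(P i) := by
    rw [← smul_eq_mul, ← sum_const, ← sum_add_distrib]
    exact sum_le_sum fun i hi => (hdeg i hi _ (hrP i hi)).2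
  have hcard : #(D \ S.image r) < #S := by
    have := card_sdiff_add_card_eq_card hsub
    have := hD.card_add_two_le
    rw [card_image_of_injOn hinj] at *
    lia
  have := Nat.mul_lt_mul_of_pos_right hcard hk
  rw [← sum_sdiff hsub, sum_image hinj]
  lia

/-- A lopsided form of Haxell's theorem on independent transversals, due to King. -/
theorem exists_isIndepTransversal [Fintype V] [Nonempty V] {k : ℕ}
    (hP : (S : Set ι).PairwiseDisjoint P) (hk : 0 < k) (hne : ∀ i ∈ S, (P i).Nonempty)
    (hdeg : ∀ i ∈ S, ∀ v ∈ P i, G.degree v ≤ k ∧ G.degree v + k ≤ #(P i)) :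
    ∃ f, IsIndepTransversal G P S f := by
  induction S using Finset.induction_on with
  | empty => exact ⟨fun _ => Classical.arbitrary V, by simp, by simp⟩
  | insert A S hAS ih =>
    by_contra! hno
    obtain ⟨f, hf⟩ := ih (hP.subset (by simp)) (fun i hi => hne i (by simp [hi]))
      (fun i hi => hdeg i (by simp [hi]))
    rw [← erase_insert hAS] at hf
    obtain ⟨T, hTS, hAT, D, hD⟩ := exists_isHaxellObstruction hP (mem_insert_self A S) hf hno
    obtain ⟨v, hv⟩ := hne A (mem_insert_self A S)
    obtain ⟨d, hd, -⟩ := hD.dominates A hAT v hv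
    have hT : 2 ≤ #T := by
      have := card_pos.2 ⟨d, hd⟩
      have := hD.card_add_two_le
      lia
    have hPT := hP.subset (coe_subset.2 hTS)
    exact (hD.sum_card_le hPT).not_gt
      (hD.sum_degree_lt hPT hT hk fun i hi => hdeg i (hTS hi))

end Merge

end Transversals

/-! ### Independent sets meeting all cliques of given size -/

section Pivots

variable {V : Type*} [Fintype V] {G : SimpleGraph V} {C : Finset (Finset V)} {o : V} {J : Set V}

/-- `J` is an independent set inside the union `C.sup id` of the family `C` which meets every member
of `C`, and `o ∈ J` is its only vertex that may have neighbours outside this union. -/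
structure IsPivot (G : SimpleGraph V) (C : Finset (Finset V)) (o : V) (J : Set V) : Prop where
  mem : o ∈ J
  subset : J ⊆ (C.sup id : Finset V)
  isIndepSet : G.IsIndepSet J
  hits : ∀ Q ∈ C, ∃ x ∈ Q, x ∈ J
  neighborFinset_subset : ∀ x ∈ J, x ≠ o → G.neighborFinset x ⊆ C.sup id

/-- `C` has a set `O` of pivots which is so large, compared to the numbers of their neighbours
outside the union of `C`, that `exists_isIndepTransversal` can be applied to such sets. -/
def HasPivots (G : SimpleGraph V) (C : Finset (Finset V)) : Prop :=
  ∃ O : Finset V, O.Nonempty ∧ ∀ o ∈ O, (∃ J, IsPivot G C o J) ∧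
    #(G.neighborFinset o \ C.sup id) ≤ 2 ∧ #(G.neighborFinset o \ C.sup id) + 2 ≤ #O

/-- The edges of `G` not contained in the union of a member of `S`. -/
def outerGraph (G : SimpleGraph V) (S : Finset (Finset (Finset V))) : SimpleGraph V where
  Adj x y := G.Adj x y ∧ ∀ C ∈ S, ¬ (x ∈ C.sup id ∧ y ∈ C.sup id)
  symm := ⟨fun _ _ h => ⟨h.1.symm, fun C hC hxy => h.2 C hC hxy.symm⟩⟩
  loopless := ⟨fun _ h => h.1.ne rfl⟩

theorem degree_outerGraph_le {S : Finset (Finset (Finset V))} (hC : C ∈ S) (ho : o ∈ C.sup id) :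
    (outerGraph G S).degree o ≤ #(G.neighborFinset o \ C.sup id) := by
  refine card_le_card fun x hx => ?_
  rw [mem_neighborFinset] at hx
  exact mem_sdiff.2 ⟨(G.mem_neighborFinset o x).2 hx.1, fun hxC => hx.2 C hC ⟨ho, hxC⟩⟩

/-- The pivots of the members of `S` can be chosen to be independent, which leaves no edges between
the corresponding hitting sets. -/
theorem exists_isIndepSet_forall_hits {S : Finset (Finset (Finset V))}
    (hS : (S : Set (Finset (Finset V))).PairwiseDisjoint fun C => C.sup id)
    (h : ∀ C ∈ S, HasPivots G C) :
    ∃ J : Set V, G.IsIndepSet J ∧ ∀ C ∈ S, ∀ Q ∈ C, ∃ x ∈ Q, x ∈ J := by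
  obtain rfl | ⟨C, hC⟩ := S.eq_empty_or_nonempty
  · exact ⟨∅, by simp, by simp⟩
  obtain ⟨O, ⟨o, -⟩, -⟩ := h C hC
  have : Nonempty V := ⟨o⟩
  choose! O hO hpivot using h
  choose! J hJ using fun C hC o ho => (hpivot C hC o ho).1
  have hOC (C) (hC : C ∈ S) : O C ⊆ C.sup id := fun o ho => (hJ C hC o ho).subset (hJ C hC o ho).mem
  obtain ⟨f, hf⟩ : ∃ f, IsIndepTransversal (outerGraph G S) O S f := by
    refine exists_isIndepTransversal (hS.mono_on hOC) two_pos hO fun C hC o ho => ?_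
    have := degree_outerGraph_le (G := G) hC (hOC C hC ho)
    have := (hpivot C hC o ho).2
    lia
  have hJf (C) (hC : C ∈ S) : IsPivot G C (f C) (J C (f C)) := hJ C hC _ (hf.mem C hC)
  refine ⟨{x | ∃ C ∈ S, x ∈ J C (f C)}, ?_, fun C hC Q hQ =>
    ((hJf C hC).hits Q hQ).imp fun x hx => ⟨hx.1, C, hC, hx.2⟩⟩
  rintro x ⟨C, hC, hx⟩ y ⟨C', hC', hy⟩ hxy hadj
  obtain rfl | hCC' := eq_or_ne C C'
  · exact (hJf C hC).isIndepSet hx hy hxy hadj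
  have hxC := (hJf C hC).subset hx
  have hyC' := (hJf C' hC').subset hy
  have hdisj := disjoint_left.1 (hS hC hC' hCC')
  obtain rfl : x = f C := by
    by_contra hne
    exact hdisj ((hJf C hC).neighborFinset_subset x hx hne (by simpa using hadj)) hyC'
  obtain rfl : y = f C' := by
    by_contra hne
    exact hdisj hxC ((hJf C' hC').neighborFinset_subset y hy hne (by simpa using hadj.symm))
  refine hf.not_adj C hC C' hC' ⟨hadj, fun C'' hC'' hxy'' => hCC' ?_⟩
  rw [hS.elim_finset hC hC'' _ hxC hxy''.1, hS.elim_finset hC' hC'' _ hyC' hxy''.2]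

end Pivots

section CliqueComponents

variable {V : Type*} {G : SimpleGraph V} {t : ℕ} {C C' : Finset (Finset V)} {Q Q' : Finset V}

/-- The intersection graph of the `t`-cliques of `G`. -/
def cliqueMeetGraph (G : SimpleGraph V) (t : ℕ) : SimpleGraph (Finset V) where
  Adj Q Q' := Q ≠ Q' ∧ G.IsNClique t Q ∧ G.IsNClique t Q' ∧ ¬ Disjoint Q Q'
  symm := ⟨fun _ _ h => ⟨h.1.symm, h.2.2.1, h.2.1, fun hd => h.2.2.2 hd.symm⟩⟩
  loopless := ⟨fun _ h => h.1 rfl⟩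

/-- `C` is (the vertex set of) a connected component of the intersection graph of the `t`-cliques
of `G`. -/
structure IsCliqueComponent (G : SimpleGraph V) (t : ℕ) (C : Finset (Finset V)) : Prop where
  nonempty : C.Nonempty
  isNClique : ∀ Q ∈ C, G.IsNClique t Q
  mem_of_not_disjoint : ∀ Q ∈ C, ∀ Q', G.IsNClique t Q' → ¬ Disjoint Q Q' → Q' ∈ C
  reachable : ∀ Q ∈ C, ∀ Q' ∈ C, (cliqueMeetGraph G t).Reachable Q Q'

theorem exists_isCliqueComponent [Finite V] (hQ : G.IsNClique t Q) :
    ∃ C, IsCliqueComponent G t C ∧ Q ∈ C := by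
  have := Fintype.ofFinite V
  refine ⟨univ.filter fun Q' => G.IsNClique t Q' ∧ (cliqueMeetGraph G t).Reachable Q Q',
    ⟨⟨Q, by simp [hQ]⟩, fun Q₁ h₁ => (mem_filter_univ _).1 h₁ |>.1, fun Q₁ h₁ Q₂ h₂ h₁₂ => ?_,
      fun Q₁ h₁ Q₂ h₂ => ?_⟩, by simp [hQ]⟩
  · rw [mem_filter_univ] at h₁ ⊢
    obtain rfl | hne := eq_or_ne Q₁ Q₂
    · exact h₁
    · exact ⟨h₂, h₁.2.trans (SimpleGraph.Adj.reachable ⟨hne, h₁.1, h₂, h₁₂⟩)⟩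
  · rw [mem_filter_univ] at h₁ h₂
    exact h₁.2.symm.trans h₂.2

theorem IsCliqueComponent.induction (hC : IsCliqueComponent G t C) {p : Finset V → Prop}
    (hQ : Q ∈ C) (base : p Q)
    (step : ∀ Q₁ ∈ C, ∀ Q₂ ∈ C, p Q₁ → ¬ Disjoint Q₁ Q₂ → p Q₂) (hQ' : Q' ∈ C) : p Q' := by
  suffices Q' ∈ C ∧ p Q' from this.2
  have hreach := (reachable_iff_reflTransGen Q Q').1 (hC.reachable Q hQ Q' hQ')
  clear hQ'
  induction hreach with
  | refl => exact ⟨hQ, base⟩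
  | tail _ hadj ih =>
    have := hC.mem_of_not_disjoint _ ih.1 _ hadj.2.2.1 hadj.2.2.2
    exact ⟨this, step _ ih.1 _ this ih.2 hadj.2.2.2⟩

theorem IsCliqueComponent.subset_of_not_disjoint (hC : IsCliqueComponent G t C)
    (hC' : IsCliqueComponent G t C') (hQ : Q ∈ C) (hQ' : Q' ∈ C') (h : ¬ Disjoint Q Q') :
    C ⊆ C' := fun _ hZ =>
  hC.induction (p := (· ∈ C')) (hC.mem_of_not_disjoint Q hQ Q' (hC'.isNClique Q' hQ') h) hQ'
    (fun Q₁ _ Q₂ h₂ h₁ => hC'.mem_of_not_disjoint Q₁ h₁ Q₂ (hC.isNClique Q₂ h₂)) hZ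

theorem IsCliqueComponent.disjoint_sup (hC : IsCliqueComponent G t C)
    (hC' : IsCliqueComponent G t C') (hne : C ≠ C') : Disjoint (C.sup id) (C'.sup id) := by
  refine disjoint_left.2 fun x hx hx' => hne ?_
  obtain ⟨Q, hQ, hxQ⟩ := mem_sup.1 hx
  obtain ⟨Q', hQ', hxQ'⟩ := mem_sup.1 hx'
  have h : ¬ Disjoint Q Q' := not_disjoint_iff.2 ⟨x, hxQ, hxQ'⟩
  exact (hC.subset_of_not_disjoint hC' hQ hQ' h).antisymm
    (hC'.subset_of_not_disjoint hC hQ' hQ fun hd => h hd.symm)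

theorem exists_isIndepSet_cliqueFreeOn_compl [Fintype V]
    (h : ∀ C, IsCliqueComponent G t C → HasPivots G C) :
    ∃ J : Set V, G.IsIndepSet J ∧ G.CliqueFreeOn Jᶜ t := by
  obtain ⟨J, hJ, hits⟩ := exists_isIndepSet_forall_hits (G := G)
    (S := univ.filter (IsCliqueComponent G t))
    (fun C hC C' hC' hne => IsCliqueComponent.disjoint_sup (by simpa using hC) (by simpa using hC')
      hne)
    (by simpa using h)
  refine ⟨J, hJ, fun Q hQJ hQ => ?_⟩
  obtain ⟨C, hC, hQC⟩ := exists_isCliqueComponent hQ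
  obtain ⟨x, hxQ, hxJ⟩ := hits C (by simpa using hC) Q hQC
  exact hQJ hxQ hxJ

end CliqueComponents

section Hajnal

variable {V : Type*} [Fintype V] {G : SimpleGraph V} {t : ℕ} {C : Finset (Finset V)}
  {Q Q' : Finset V} {v : V}

theorem mem_inf_id : v ∈ C.inf id ↔ ∀ Q ∈ C, v ∈ Q := by
  simp only [← singleton_subset_iff, Finset.le_inf_iff, id_eq]

theorem inf_id_subset_sup_id (hne : C.Nonempty) : C.inf id ⊆ C.sup id :=
  let ⟨_, hQ⟩ := hne
  fun _ hv => mem_sup.2 ⟨_, hQ, mem_inf_id.1 hv _ hQ⟩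

theorem adj_of_mem_inf_of_mem_sup (hC : ∀ Q ∈ C, G.IsNClique t Q) {u : V} (hu : u ∈ C.inf id)
    (hv : v ∈ C.sup id) (huv : u ≠ v) : G.Adj u v := by
  obtain ⟨Q, hQ, hvQ⟩ := mem_sup.1 hv
  exact (hC Q hQ).isClique (mem_inf_id.1 hu Q hQ) hvQ huv

/-- Hajnal's inequality. In the induction step, `C.inf id ∪ (C.sup id ∩ Q)` is a clique and
therefore has at most `t` elements. -/
theorem two_mul_le_card_inf_add_card_sup (hfree : G.CliqueFree (t + 1)) (hne : C.Nonempty)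
    (hC : ∀ Q ∈ C, G.IsNClique t Q) : 2 * t ≤ #(C.inf id) + #(C.sup id) := by
  induction hne using Finset.Nonempty.cons_induction with
  | singleton Q => simp [(hC Q (by simp)).card_eq, two_mul]
  | cons Q C hQC hne ih =>
    rw [forall_mem_cons] at hC
    have adj {u v} := adj_of_mem_inf_of_mem_sup hC.2 (u := u) (v := v)
    have hclique : G.IsClique (C.inf id ∪ (C.sup id ∩ Q) : Finset V) := by
      intro u hu v hv huv
      simp only [coe_union, coe_inter, Set.mem_union, Set.mem_inter_iff, mem_coe] at hu hv
      obtain hu | hu := hu <;> obtain hv | hv := hv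
      · exact adj hu (inf_id_subset_sup_id hne hv) huv
      · exact adj hu hv.1 huv
      · exact (adj hv hu.1 huv.symm).symm
      · exact hC.1.isClique hu.2 hv.2 huv
    have hle : #(C.inf id ∪ (C.sup id ∩ Q)) ≤ t := by
      by_contra! hlt
      exact hfree.mono hlt _ ⟨hclique, rfl⟩
    have hsub : C.inf id ∩ (C.sup id ∩ Q) ⊆ Q ∩ C.inf id := fun v hv => by
      simp only [mem_inter] at hv ⊢
      exact ⟨hv.2.2, hv.1⟩
    have := card_le_card hsub
    have := ih hC.2
    have := hC.1.card_eq
    have := card_union_add_card_inter (C.inf id) (C.sup id ∩ Q)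
    have := card_union_add_card_inter Q (C.sup id)
    rw [inf_cons, sup_cons]
    simp only [id_eq, inf_eq_inter, sup_eq_union, inter_comm Q (C.sup id)] at *
    lia

section DegreeBound

variable (hfree : G.CliqueFree (t + 1)) (hdeg : ∀ v, G.degree v ≤ t + 1)
include hfree hdeg

omit hfree in
theorem card_neighborFinset_sdiff_add_card_sup_le (hne : C.Nonempty)
    (hC : ∀ Q ∈ C, G.IsNClique t Q) (hv : v ∈ C.inf id) :
    #(G.neighborFinset v \ C.sup id) + #(C.sup id) ≤ t + 2 := by
  have hsub : C.sup id ⊆ insert v (G.neighborFinset v) := fun u hu => by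
    rw [mem_insert, mem_neighborFinset]
    exact or_iff_not_imp_left.2 fun h => adj_of_mem_inf_of_mem_sup hC hv hu (Ne.symm h)
  rw [← insert_sdiff_of_mem _ (inf_id_subset_sup_id hne hv), card_sdiff_add_card_eq_card hsub,
    card_insert_of_notMem (G.notMem_neighborFinset_self v), card_neighborFinset_eq_degree]
  exact Nat.succ_le_succ (hdeg v)

theorem le_card_inter_add_two (hQ : G.IsNClique t Q) (hQ' : G.IsNClique t Q')
    (h : ¬ Disjoint Q Q') : t ≤ #(Q ∩ Q') + 2 := by
  obtain ⟨v, hv⟩ := not_disjoint_iff_nonempty_inter.1 h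
  have hne : ({Q, Q'} : Finset (Finset V)).Nonempty := by simp
  have hC : ∀ Z ∈ ({Q, Q'} : Finset (Finset V)), G.IsNClique t Z := by simp [hQ, hQ']
  have h₁ := two_mul_le_card_inf_add_card_sup hfree hne hC
  have h₂ := card_neighborFinset_sdiff_add_card_sup_le hdeg hne hC (v := v) (by simpa using hv)
  simp only [inf_insert, inf_singleton, id_eq, inf_eq_inter] at h₁
  lia

/-- If no vertex of `Q` lay in all members of `C`, then by Hajnal's inequality all intersections
`Z ∩ Q` with `Z ∈ C` would coincide, as they would have the same size as `C.sup id ∩ Q`. -/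
theorem inf_id_nonempty (ht : 4 ≤ t) (hne : C.Nonempty) (hC : ∀ Q ∈ C, G.IsNClique t Q)
    (hmeet : ∀ Q ∈ C, ∀ Q' ∈ C, ¬ Disjoint Q Q') : (C.inf id).Nonempty := by
  induction hne using Finset.Nonempty.cons_induction with
  | singleton Q =>
    have := hmeet Q (by simp) Q (by simp)
    simpa [nonempty_iff_ne_empty] using this
  | cons Q C hQC hne ih =>
    have hC' := (forall_mem_cons _ _).1 hC
    obtain ⟨v, hv⟩ := ih hC'.2 fun Z hZ Z' hZ' => hmeet Z (by simp [hZ]) Z' (by simp [hZ'])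
    by_contra hempty
    have hajnal := two_mul_le_card_inf_add_card_sup hfree (cons_nonempty hQC) hC
    have hsup := card_neighborFinset_sdiff_add_card_sup_le hdeg hne hC'.2 hv
    have hunion := card_union_add_card_inter Q (C.sup id)
    rw [not_nonempty_iff_eq_empty] at hempty
    rw [hempty, sup_cons, card_empty, id_eq, sup_eq_union] at hajnal
    rw [hC'.1.card_eq] at hunion
    have hinter (Z) (hZ : Z ∈ C) : Q ∩ Z = Q ∩ C.sup id := by
      have := le_card_inter_add_two hfree hdeg hC'.1 (hC'.2 Z hZ)
        (hmeet Q (by simp) Z (by simp [hZ]))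
      refine eq_of_subset_of_card_le (inter_subset_inter_left (le_sup (f := id) hZ)) ?_
      lia
    obtain ⟨Z, hZ⟩ := hne
    obtain ⟨x, hx⟩ := not_disjoint_iff_nonempty_inter.1 (hmeet Q (by simp) Z (by simp [hZ]))
    rw [hinter Z hZ] at hx
    refine notMem_empty x (hempty ▸ mem_inf_id.2 ((forall_mem_cons _ _).2
      ⟨(mem_inter.1 hx).1, fun Z hZ => ?_⟩))
    rw [← hinter Z hZ] at hx
    exact (mem_inter.1 hx).2

theorem hasPivots_of_pairwise_not_disjoint (ht : 4 ≤ t) (hne : C.Nonempty)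
    (hC : ∀ Q ∈ C, G.IsNClique t Q) (hmeet : ∀ Q ∈ C, ∀ Q' ∈ C, ¬ Disjoint Q Q') :
    HasPivots G C := by
  refine ⟨C.inf id, inf_id_nonempty hfree hdeg ht hne hC hmeet, fun o ho => ⟨⟨{o}, ?_⟩, ?_⟩⟩
  · exact ⟨rfl, by simpa using inf_id_subset_sup_id hne ho, by simp,
      fun Q hQ => ⟨o, mem_inf_id.1 ho Q hQ, rfl⟩, fun x hx hxo => (hxo hx).elim⟩
  · have := two_mul_le_card_inf_add_card_sup hfree hne hC
    have := card_neighborFinset_sdiff_add_card_sup_le hdeg hne hC ho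
    have : t ≤ #(C.sup id) := by
      obtain ⟨Q, hQ⟩ := hne
      exact (hC Q hQ).card_eq.symm.trans_le (card_le_card (le_sup (f := id) hQ))
    lia

/-- For `5 ≤ t` two `t`-cliques that meet share more than half of their vertices, so meeting is
transitive. -/
theorem exists_isIndepSet_cliqueFreeOn_compl_of_five_le (ht : 5 ≤ t) :
    ∃ J : Set V, G.IsIndepSet J ∧ G.CliqueFreeOn Jᶜ t := by
  refine exists_isIndepSet_cliqueFreeOn_compl fun C hC => ?_
  refine hasPivots_of_pairwise_not_disjoint hfree hdeg (by lia) hC.nonempty hC.isNClique ?_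
  intro Q hQ Q' hQ'
  refine hC.induction (p := fun Z => ¬ Disjoint Q Z) hQ ?_
    (fun Q₁ h₁ Q₂ h₂ hQQ₁ h₁₂ hdisj => ?_) hQ'
  · rw [disjoint_self_iff_empty, ← card_eq_zero, (hC.isNClique Q hQ).card_eq]
    lia
  · have hsub : Q ∩ Q₁ ∪ Q₁ ∩ Q₂ ⊆ Q₁ := union_subset inter_subset_right inter_subset_left
    have hle := card_le_card hsub
    rw [card_union_of_disjoint (hdisj.mono inter_subset_left inter_subset_right),
      (hC.isNClique Q₁ h₁).card_eq] at hle
    have := le_card_inter_add_two hfree hdeg (hC.isNClique Q hQ) (hC.isNClique Q₁ h₁) hQQ₁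
    have := le_card_inter_add_two hfree hdeg (hC.isNClique Q₁ h₁) (hC.isNClique Q₂ h₂) h₁₂
    lia

end DegreeBound

end Hajnal

/-! ### Chains of pairs -/

section PairChains

variable {V : Type*} {G : SimpleGraph V} {C : Finset (Finset V)} {m i j : ℕ} {X : ℕ → Finset V}
  {A B D Z : Finset V} {v : V}

theorem insert_neighborFinset_eq_union [Fintype V] (hdeg : G.degree v ≤ 5) (hv : v ∈ B)
    (hAB : G.IsClique (A ∪ B : Finset V)) (hBD : G.IsClique (B ∪ D : Finset V))
    (hcard : 6 ≤ #(A ∪ B ∪ D)) : insert v (G.neighborFinset v) = A ∪ B ∪ D := by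
  refine (eq_of_subset_of_card_le (fun x hx => ?_) ?_).symm
  · rw [mem_insert, mem_neighborFinset, or_iff_not_imp_left]
    intro hxv
    simp only [mem_union] at hx
    obtain hx | hx := hx
    · exact hAB (by simp [hv]) (by simp [hx]) (Ne.symm hxv)
    · exact hBD (by simp [hv]) (by simp [hx]) (Ne.symm hxv)
  · rw [card_insert_of_notMem (G.notMem_neighborFinset_self v), card_neighborFinset_eq_degree]
    lia

theorem subset_insert_neighborFinset [Fintype V] (hZ : G.IsClique (Z : Set V)) (hv : v ∈ Z) :
    Z ⊆ insert v (G.neighborFinset v) := fun x hx => by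
  rw [mem_insert, mem_neighborFinset]
  exact or_iff_not_imp_left.2 fun h => hZ hv hx (Ne.symm h)

/-- `X 0, …, X m` are pairwise disjoint pairs of vertices, and any two consecutive ones form a
`4`-clique. -/
structure IsPairChain (G : SimpleGraph V) (m : ℕ) (X : ℕ → Finset V) : Prop where
  card_eq : ∀ i ≤ m, #(X i) = 2
  disjoint : ∀ j ≤ m, ∀ i < j, Disjoint (X i) (X j)
  isNClique : ∀ i < m, G.IsNClique 4 (X i ∪ X (i + 1))

namespace IsPairChain

variable (h : IsPairChain G m X)
include h

theorem eq_of_mem (hi : i ≤ m) (hj : j ≤ m) (hvi : v ∈ X i) (hvj : v ∈ X j) : i = j := by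
  obtain hij | hij | hij := lt_trichotomy i j
  · exact (disjoint_left.1 (h.disjoint j hj i hij) hvi hvj).elim
  · exact hij
  · exact (disjoint_left.1 (h.disjoint i hi j hij) hvj hvi).elim

theorem nonempty (hi : i ≤ m) : (X i).Nonempty := card_pos.1 (by simp [h.card_eq i hi])

theorem reverse : IsPairChain G m fun i => X (m - i) := by
  refine ⟨fun i _ => h.card_eq _ (by lia), fun j hj i hij =>
    (h.disjoint (m - i) (by lia) (m - j) (by lia)).symm, fun i hi => ?_⟩
  have := h.isNClique (m - (i + 1)) (by lia)
  rwa [show m - (i + 1) + 1 = m - i by lia, union_comm] at this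

theorem lt_card [Fintype V] : m < Fintype.card V := by
  have hdisj : ((range (m + 1) : Finset ℕ) : Set ℕ).PairwiseDisjoint X := fun i hi j hj hij => by
    rw [coe_range, Set.mem_Iio] at hi hj
    obtain hij | hij := lt_or_gt_of_ne hij
    · exact h.disjoint j (by lia) i hij
    · exact (h.disjoint i (by lia) j hij).symm
  have hcard : #((range (m + 1)).biUnion X) = (m + 1) * 2 := by
    rw [card_biUnion hdisj, sum_const_nat fun i hi => h.card_eq i (by simpa using hi), card_range]
  have := card_le_univ ((range (m + 1)).biUnion X)
  lia

theorem snoc (hA : #A = 2) (hdisj : ∀ i ≤ m, Disjoint (X i) A) (hclique : G.IsNClique 4 (X m ∪ A)) :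
    IsPairChain G (m + 1) (Function.update X (m + 1) A) := by
  refine ⟨fun i hi => ?_, fun j hj i hij => ?_, fun i hi => ?_⟩
  · obtain rfl | him := eq_or_ne i (m + 1)
    · simpa using hA
    · simpa [him] using h.card_eq i (by lia)
  · rw [Function.update_of_ne (by lia : i ≠ m + 1)]
    obtain rfl | hjm := eq_or_ne j (m + 1)
    · simpa using hdisj i (by lia)
    · simpa [hjm] using h.disjoint j (by lia) i hij
  · rw [Function.update_of_ne (by lia : i ≠ m + 1)]
    obtain rfl | him := eq_or_ne i m
    · simpa using hclique
    · simpa [him] using h.isNClique i (by lia)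

theorem mem_of_isCliqueComponent (hC : IsCliqueComponent G 4 C) (h₀ : X 0 ∪ X 1 ∈ C) (hi : i < m) :
    X i ∪ X (i + 1) ∈ C := by
  induction i with
  | zero => exact h₀
  | succ i ih =>
    obtain ⟨x, hx⟩ := h.nonempty hi.le
    exact hC.mem_of_not_disjoint _ (ih (by lia)) _ (h.isNClique _ hi)
      (not_disjoint_iff.2 ⟨x, by simp [hx], by simp [hx]⟩)

variable [Fintype V] (hdeg : ∀ v, G.degree v ≤ 5)
include hdeg

theorem insert_neighborFinset_eq (hi : i + 2 ≤ m) (hv : v ∈ X (i + 1)) :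
    insert v (G.neighborFinset v) = X i ∪ X (i + 1) ∪ X (i + 2) := by
  refine insert_neighborFinset_eq_union (hdeg v) hv (h.isNClique i (by lia)).isClique
    (h.isNClique (i + 1) (by lia)).isClique ?_
  rw [card_union_of_disjoint, (h.isNClique i (by lia)).card_eq, h.card_eq _ hi]
  exact disjoint_union_left.2 ⟨h.disjoint _ hi _ (by lia), h.disjoint _ hi _ (by lia)⟩

theorem exists_mem_of_adj {u : V} (hi₀ : 0 < i) (hi : i < m) (hv : v ∈ X i) (huv : G.Adj v u) :
    ∃ j ≤ m, u ∈ X j ∧ i ≤ j + 1 ∧ j ≤ i + 1 := by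
  obtain ⟨i, rfl⟩ := Nat.exists_eq_add_one.2 hi₀
  have hu : u ∈ insert v (G.neighborFinset v) := by simp [huv]
  simp only [h.insert_neighborFinset_eq hdeg (by lia) hv, mem_union] at hu
  obtain (hu | hu) | hu := hu
  exacts [⟨i, by lia, hu, by lia⟩, ⟨i + 1, by lia, hu, by lia⟩, ⟨i + 2, by lia, hu, by lia⟩]

/-- If `Z` meets `X (i + 1)`, it lies in three consecutive pairs; if it also meets `X (i + 2)`, then
it lies in the next three consecutive pairs as well. -/
theorem eq_or_eq_of_add_three_le (hi : i + 3 ≤ m) (hZ : G.IsNClique 4 Z)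
    (hmeet : ¬ Disjoint Z (X (i + 1))) : Z = X i ∪ X (i + 1) ∨ Z = X (i + 1) ∪ X (i + 2) := by
  obtain ⟨v, hvZ, hv⟩ := not_disjoint_iff.1 hmeet
  have hsub := subset_insert_neighborFinset hZ.isClique hvZ
  rw [h.insert_neighborFinset_eq hdeg (by lia) hv] at hsub
  by_cases hmeet' : Disjoint Z (X (i + 2))
  · left
    refine eq_of_subset_of_card_le (fun x hx => ?_)
      ((h.isNClique i (by lia)).card_eq.trans hZ.card_eq.symm).le
    exact (mem_union.1 (hsub hx)).resolve_right (disjoint_left.1 hmeet' hx)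
  · right
    obtain ⟨u, huZ, hu⟩ := not_disjoint_iff.1 hmeet'
    have hsub' := subset_insert_neighborFinset hZ.isClique huZ
    rw [h.insert_neighborFinset_eq hdeg (i := i + 1) hi hu] at hsub'
    refine eq_of_subset_of_card_le (fun x hx => ?_)
      ((h.isNClique (i + 1) (by lia)).card_eq.trans hZ.card_eq.symm).le
    have hx₁ := hsub hx
    have hx₂ := hsub' hx
    have hdisj : x ∈ X i → x ∉ X (i + 3) := fun hx =>
      disjoint_left.1 (h.disjoint (i + 3) hi i (by lia)) hx
    simp only [mem_union] at hx₁ hx₂ ⊢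
    tauto

theorem eq_or_eq_of_interior (hm : 3 ≤ m) (hi₀ : 0 < i) (hi : i < m) (hZ : G.IsNClique 4 Z)
    (hmeet : ¬ Disjoint Z (X i)) : Z = X (i - 1) ∪ X i ∨ Z = X i ∪ X (i + 1) := by
  obtain ⟨i, rfl⟩ := Nat.exists_eq_add_one.2 hi₀
  obtain hi | hi : i + 3 ≤ m ∨ m = i + 2 := by lia
  · exact h.eq_or_eq_of_add_three_le hdeg hi hZ hmeet
  · have := h.reverse.eq_or_eq_of_add_three_le hdeg (i := 0) (by lia) hZ (by simpa [hi] using hmeet)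
    simpa [hi, union_comm, or_comm] using this

end IsPairChain

/-- `X 0, …, X m` is a chain of pairs in the clique component `C` which is long enough to determine
the `4`-cliques meeting its interior and as long as possible. -/
structure IsMaximalPairChain (G : SimpleGraph V) (C : Finset (Finset V)) (m : ℕ)
    (X : ℕ → Finset V) : Prop extends IsPairChain G m X where
  three_le : 3 ≤ m
  mem : X 0 ∪ X 1 ∈ C
  notMem : ∀ X', IsPairChain G (m + 1) X' → X' 0 ∪ X' 1 ∉ C

theorem exists_isMaximalPairChain [Finite V] (hX : IsPairChain G 3 X) (h₀ : X 0 ∪ X 1 ∈ C) :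
    ∃ m Y, IsMaximalPairChain G C m Y := by
  have := Fintype.ofFinite V
  by_contra! hmax
  have key (k) : ∃ Y, IsPairChain G (k + 3) Y ∧ Y 0 ∪ Y 1 ∈ C := by
    induction k with
    | zero => exact ⟨X, hX, h₀⟩
    | succ k ih =>
      obtain ⟨Y, hY, hY₀⟩ := ih
      by_contra! hne
      exact hmax (k + 3) Y ⟨hY, by lia, hY₀, fun X' hX' => hne X' (by rwa [add_right_comm])⟩
  obtain ⟨Y, hY, -⟩ := key (Fintype.card V)
  have := hY.lt_card
  lia

namespace IsMaximalPairChain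

variable (h : IsMaximalPairChain G C m X) (hC : IsCliqueComponent G 4 C)
include h hC

theorem reverse : IsMaximalPairChain G C m fun i => X (m - i) where
  toIsPairChain := h.toIsPairChain.reverse
  three_le := h.three_le
  mem := by
    have hm := h.three_le
    have := h.mem_of_isCliqueComponent hC h.mem (i := m - 1) (by lia)
    rwa [show m - 1 + 1 = m by lia, union_comm] at this
  notMem := h.notMem

theorem subset_sup (hi : i ≤ m) : X i ⊆ C.sup id := by
  have hm := h.three_le
  have hmem := fun i => h.mem_of_isCliqueComponent hC h.mem (i := i)
  obtain hi | rfl := hi.lt_or_eq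
  · exact subset_union_left.trans (le_sup (f := id) (hmem i hi))
  · have := hmem (i - 1) (by lia)
    rw [show i - 1 + 1 = i by lia] at this
    exact subset_union_right.trans (le_sup (f := id) this)

variable [Fintype V] (hdeg : ∀ v, G.degree v ≤ 5)
include hdeg

omit hC in
theorem disjoint_interior (hi₀ : 0 < i) (hi : i < m) (hZ : G.IsNClique 4 Z)
    (hlast : ¬ Disjoint Z (X m)) (hne : Z ≠ X (m - 1) ∪ X m) : Disjoint Z (X i) := by
  by_contra hmeet
  obtain ⟨v, hvZ, hv⟩ := not_disjoint_iff.1 hlast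
  obtain rfl | rfl := h.eq_or_eq_of_interior hdeg h.three_le hi₀ hi hZ hmeet
  · obtain hv' | hv' := mem_union.1 hvZ
    · have := h.eq_of_mem (by lia) le_rfl hv' hv
      lia
    · exact hi.ne (h.eq_of_mem hi.le le_rfl hv' hv)
  · obtain hv' | hv' := mem_union.1 hvZ
    · exact hi.ne (h.eq_of_mem hi.le le_rfl hv' hv)
    · obtain rfl := h.eq_of_mem (by lia) le_rfl hv' hv
      simp at hne

variable (hfree : G.CliqueFree 5)
include hfree

omit h hC in
theorem subset_of_disjoint_of_not_disjoint (hZ : G.IsNClique 4 Z) (hA : #A = 2)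
    (hAB : G.IsNClique 4 (A ∪ B)) (hZB : Disjoint Z B) (hZA : ¬ Disjoint Z A) : A ⊆ Z := by
  have := le_card_inter_add_two hfree hdeg hZ hAB fun hd => hZA (hd.mono_right subset_union_left)
  rw [inter_union_distrib_left, disjoint_iff_inter_eq_empty.1 hZB, union_empty] at this
  exact inter_eq_right.1 (eq_of_subset_of_card_le inter_subset_right (by lia))

omit hC in
/-- A `4`-clique `Z` meeting the last pair would otherwise prolong the chain by `Z \ X m`. -/
theorem eq_or_eq_of_last (hZ : G.IsNClique 4 Z) (hmeet : ¬ Disjoint Z (X m)) :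
    Z = X (m - 1) ∪ X m ∨ Z = X m ∪ X 0 := by
  have hm := h.three_le
  refine or_iff_not_imp_left.2 fun hne => ?_
  have hint {i} (hi₀ : 0 < i) (hi : i < m) := h.disjoint_interior hdeg hi₀ hi hZ hmeet hne
  have hmm : X m ⊆ Z := by
    refine subset_of_disjoint_of_not_disjoint hdeg hfree hZ (h.card_eq m le_rfl) (B := X (m - 1)) ?_
      (hint (by lia) (by lia)) hmeet
    have := h.isNClique (m - 1) (by lia)
    rwa [show m - 1 + 1 = m by lia, union_comm] at this
  have hcard : #(X m ∪ X 0) = 4 := by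
    rw [card_union_of_disjoint (h.disjoint m le_rfl 0 (by lia)).symm, h.card_eq m le_rfl,
      h.card_eq 0 (by lia)]
  by_cases hmeet₀ : Disjoint Z (X 0)
  · refine (h.notMem _ (h.snoc (A := Z \ X m) ?_ (fun i hi => ?_) ?_) ?_).elim
    · rw [card_sdiff_of_subset hmm, hZ.card_eq, h.card_eq m le_rfl]
    · obtain rfl | hi₀ := eq_or_ne i 0
      · exact hmeet₀.symm.mono_right sdiff_subset
      obtain rfl | him := eq_or_ne i m
      · exact disjoint_sdiff
      · exact (hint (by lia) (by lia)).symm.mono_right sdiff_subset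
    · rwa [union_sdiff_of_subset hmm]
    · simpa [show m ≠ 0 by lia] using h.mem
  · have h₀ : X 0 ⊆ Z := subset_of_disjoint_of_not_disjoint hdeg hfree hZ (h.card_eq 0 (by lia))
      (h.isNClique 0 (by lia)) (hint one_pos (by lia)) hmeet₀
    exact (eq_of_subset_of_card_le (union_subset hmm h₀) (hZ.card_eq.trans hcard.symm).le).symm

theorem eq_or_eq_of_mem (hZ : Z ∈ C) : (∃ i < m, Z = X i ∪ X (i + 1)) ∨ Z = X m ∪ X 0 := by
  have hm := h.three_le
  refine hC.induction (p := fun Z => (∃ i < m, Z = X i ∪ X (i + 1)) ∨ Z = X m ∪ X 0) h.mem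
    (Or.inl ⟨0, by lia, rfl⟩) (fun Q₁ _ Q₂ h₂ hQ₁ hmeet => ?_) hZ
  obtain ⟨i, hi, hmeet⟩ : ∃ i ≤ m, ¬ Disjoint Q₂ (X i) := by
    by_contra! hdisj
    obtain ⟨i, hi, rfl⟩ | rfl := hQ₁
    · exact hmeet (disjoint_union_left.2 ⟨(hdisj i hi.le).symm, (hdisj (i + 1) hi).symm⟩)
    · exact hmeet (disjoint_union_left.2 ⟨(hdisj m le_rfl).symm, (hdisj 0 (by lia)).symm⟩)
  have hQ₂ := hC.isNClique Q₂ h₂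
  obtain rfl | hi₀ := Nat.eq_zero_or_pos i
  · have := (h.reverse hC).eq_or_eq_of_last hdeg hfree hQ₂ (by simpa using hmeet)
    simp only [Nat.sub_self, Nat.sub_zero, show m - (m - 1) = 1 by lia] at this
    obtain rfl | rfl := this
    · exact Or.inl ⟨0, by lia, union_comm _ _⟩
    · exact Or.inr (union_comm _ _)
  obtain hi | rfl := hi.lt_or_eq
  · obtain rfl | rfl := h.eq_or_eq_of_interior hdeg hm hi₀ hi hQ₂ hmeet
    · exact Or.inl ⟨i - 1, by lia, by rw [Nat.sub_add_cancel hi₀]⟩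
    · exact Or.inl ⟨i, hi, rfl⟩
  · refine (h.eq_or_eq_of_last hdeg hfree hQ₂ hmeet).imp_left fun hQ => ⟨i - 1, by lia, ?_⟩
    rw [hQ, Nat.sub_add_cancel hi₀]

theorem exists_eq_union_of_mem (hodd : X m ∪ X 0 ∈ C → Odd m) (hZ : Z ∈ C) :
    ∃ i ≤ m, ∃ j ≤ m, i % 2 ≠ j % 2 ∧ Z = X i ∪ X j := by
  obtain ⟨i, hi, rfl⟩ | rfl := h.eq_or_eq_of_mem hC hdeg hfree hZ
  · exact ⟨i, hi.le, i + 1, hi, by lia, rfl⟩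
  · exact ⟨m, le_rfl, 0, m.zero_le, by simp [Nat.odd_iff.1 (hodd hZ)], rfl⟩

/-- A pivot `o ∈ X e` is completed to a hitting set by vertices of the pairs `X i` with `i` of the
same parity as `e`, provided that no such pair apart from `X e` is an end of the chain. -/
theorem exists_isPivot {e : ℕ} {o : V} (he : e ≤ m) (ho : o ∈ X e)
    (hpar : ∀ i ≤ m, i % 2 = e % 2 → i ≠ e → 0 < i ∧ i < m)
    (hodd : X m ∪ X 0 ∈ C → Odd m) : ∃ J, IsPivot G C o J := by
  have hex : ∀ i, ∃ y, i ≤ m → y ∈ X i := fun i => by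
    by_cases hi : i ≤ m
    · exact (h.nonempty hi).imp fun y hy _ => hy
    · exact ⟨o, fun hi' => (hi hi').elim⟩
  choose y₀ hy₀ using hex
  let y := Function.update y₀ e o
  have hye : y e = o := by simp [y]
  have hy {i} (hi : i ≤ m) : y i ∈ X i := by
    obtain rfl | hie := eq_or_ne i e
    · rwa [hye]
    · simpa [y, hie] using hy₀ i hi
  have hnadj {i j} (hi : i ≤ m) (hie : i % 2 = e % 2) (hj : j ≤ m) (hje : j % 2 = e % 2)
      (hne : i ≠ e) : ¬ G.Adj (y i) (y j) := fun hadj => by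
    obtain ⟨hi₀, him⟩ := hpar i hi hie hne
    obtain ⟨k, hk, hyk, hik⟩ := h.exists_mem_of_adj hdeg hi₀ him (hy hi) hadj
    obtain rfl := h.eq_of_mem hk hj hyk (hy hj)
    obtain rfl : i = k := by lia
    exact hadj.ne rfl
  refine ⟨{x | ∃ i ≤ m, i % 2 = e % 2 ∧ y i = x}, ⟨e, he, rfl, hye⟩, ?_, ?_, fun Q hQ => ?_, ?_⟩
  · rintro _ ⟨i, hi, -, rfl⟩
    exact h.subset_sup hC hi (hy hi)
  · rintro _ ⟨i, hi, hie, rfl⟩ _ ⟨j, hj, hje, rfl⟩ hne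
    by_cases hi' : i = e
    · by_cases hj' : j = e
      · exact (hne (by rw [hi', hj'])).elim
      · exact fun hadj => hnadj hj hje hi hie hj' hadj.symm
    · exact hnadj hi hie hj hje hi'
  · obtain ⟨i, hi, j, hj, hij, rfl⟩ := h.exists_eq_union_of_mem hC hdeg hfree hodd hQ
    obtain hie | hje : i % 2 = e % 2 ∨ j % 2 = e % 2 := by lia
    · exact ⟨y i, by simp [hy hi], i, hi, hie, rfl⟩
    · exact ⟨y j, by simp [hy hj], j, hj, hje, rfl⟩
  · rintro _ ⟨i, hi, hie, rfl⟩ hne u hu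
    obtain ⟨hi₀, him⟩ := hpar i hi hie fun hi' => hne (by rw [hi', hye])
    obtain ⟨k, hk, hyk, -⟩ := h.exists_mem_of_adj hdeg hi₀ him (hy hi) (by simpa using hu)
    exact h.subset_sup hC hk hyk

end IsMaximalPairChain

/-- The pairs `Y i` are pairwise disjoint, and any two cyclically consecutive ones form a
`4`-clique. -/
structure IsCliqueRing {n : ℕ} (G : SimpleGraph V) (Y : ZMod n → Finset V) : Prop where
  card_eq : ∀ i, #(Y i) = 2
  disjoint : ∀ i j, i ≠ j → Disjoint (Y i) (Y j)
  isNClique : ∀ i, G.IsNClique 4 (Y i ∪ Y (i + 1))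

theorem IsPairChain.isCliqueRing (h : IsPairChain G m X) (hm : 0 < m)
    (hclosed : G.IsNClique 4 (X m ∪ X 0)) :
    IsCliqueRing (n := m + 1) G fun i => X i.val := by
  have hle (i : ZMod (m + 1)) : i.val ≤ m := Nat.lt_succ_iff.1 i.val_lt
  refine ⟨fun i => h.card_eq _ (hle i), fun i j hij => disjoint_left.2 fun v hi hj =>
    hij (ZMod.val_injective _ (h.eq_of_mem (hle i) (hle j) hi hj)), fun i => ?_⟩
  have : Fact (1 < m + 1) := ⟨by lia⟩
  obtain hi | hi := (hle i).lt_or_eq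
  · rw [ZMod.val_add_of_lt (by rw [ZMod.val_one]; lia), ZMod.val_one]
    exact h.isNClique _ hi
  · have : i + 1 = 0 := by
      rw [← ZMod.natCast_zmod_val i, hi, ← Nat.cast_succ, ZMod.natCast_self]
    rwa [this, hi, ZMod.val_zero]

theorem card_neighborFinset_sdiff_sup_add_le [Fintype V] (hC : IsCliqueComponent G 4 C)
    (hv : v ∈ C.sup id) : #(G.neighborFinset v \ C.sup id) + 3 ≤ G.degree v := by
  obtain ⟨Q, hQ, hvQ : v ∈ Q⟩ := mem_sup.1 hv
  have hclique := hC.isNClique Q hQ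
  have hsub : Q.erase v ⊆ G.neighborFinset v := fun x hx => by
    rw [mem_erase] at hx
    simpa using hclique.isClique hvQ hx.2 (Ne.symm hx.1)
  have hcard : #(Q.erase v) = 3 := by rw [card_erase_of_mem hvQ, hclique.card_eq]
  rw [← hcard, ← card_neighborFinset_eq_degree, ← card_sdiff_add_card_eq_card hsub]
  gcongr
  exact (erase_subset v Q).trans (le_sup (f := id) hQ)

section CliqueFreeFive

variable [Fintype V] (hdeg : ∀ v, G.degree v ≤ 5) (hfree : G.CliqueFree 5)
include hdeg hfree

theorem exists_isPairChain_of_disjoint {Q₁ Q₂ Q₃ : Finset V} (h₁ : G.IsNClique 4 Q₁)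
    (h₂ : G.IsNClique 4 Q₂) (h₃ : G.IsNClique 4 Q₃) (h₁₂ : ¬ Disjoint Q₁ Q₂)
    (h₂₃ : ¬ Disjoint Q₂ Q₃) (h₁₃ : Disjoint Q₁ Q₃) :
    ∃ X, IsPairChain G 3 X ∧ X 0 ∪ X 1 = Q₁ := by
  have hd : Disjoint (Q₁ ∩ Q₂) (Q₂ ∩ Q₃) := h₁₃.mono inter_subset_left inter_subset_right
  have hle : 4 ≤ #(Q₁ ∩ Q₂) + 2 := le_card_inter_add_two hfree hdeg h₁ h₂ h₁₂
  have hle' : 4 ≤ #(Q₂ ∩ Q₃) + 2 := le_card_inter_add_two hfree hdeg h₂ h₃ h₂₃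
  have hsub : Q₁ ∩ Q₂ ∪ Q₂ ∩ Q₃ ⊆ Q₂ := union_subset inter_subset_right inter_subset_left
  have hcard := card_le_card hsub
  rw [card_union_of_disjoint hd, h₂.card_eq] at hcard
  have hunion : Q₁ ∩ Q₂ ∪ Q₂ ∩ Q₃ = Q₂ := by
    refine eq_of_subset_of_card_le hsub ?_
    rw [card_union_of_disjoint hd, h₂.card_eq]
    lia
  have hcard₁ := card_sdiff_add_card_inter Q₁ Q₂
  have hcard₃ := card_sdiff_add_card_inter Q₃ Q₂
  rw [h₁.card_eq] at hcard₁
  rw [h₃.card_eq, inter_comm] at hcard₃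
  let X : ℕ → Finset V
    | 0 => Q₁ \ Q₂
    | 1 => Q₁ ∩ Q₂
    | 2 => Q₂ ∩ Q₃
    | _ => Q₃ \ Q₂
  refine ⟨X, ⟨fun i hi => ?_, fun j hj i hij => ?_, fun i hi => ?_⟩, sdiff_union_inter _ _⟩
  · interval_cases i <;> simp only [X] <;> lia
  · have hd' := disjoint_left.1 h₁₃
    refine Finset.disjoint_left.2 fun v => ?_
    interval_cases j <;> interval_cases i <;>
      simp only [X, mem_sdiff, mem_inter, not_and, not_not] <;> grind
  · interval_cases i
    · simpa [X, sdiff_union_inter] using h₁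
    · simpa [X, hunion] using h₂
    · rw [show X 2 ∪ X (2 + 1) = Q₃ by
        simp only [X]; rw [union_comm, inter_comm, sdiff_union_inter]]
      exact h₃

theorem IsMaximalPairChain.hasPivots_of_closed (h : IsMaximalPairChain G C m X)
    (hC : IsCliqueComponent G 4 C) (hclosed : X m ∪ X 0 ∈ C) (hm : Odd m) : HasPivots G C := by
  have hm₃ := h.three_le
  rw [Nat.odd_iff] at hm
  refine ⟨X 0, h.nonempty (by lia), fun o ho => ⟨?_, ?_⟩⟩
  · exact h.exists_isPivot hC hdeg hfree (by lia) ho (by lia) fun _ => Nat.odd_iff.2 hm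
  suffices G.neighborFinset o ⊆ C.sup id by
    rw [sdiff_eq_empty_iff_subset.2 this, h.card_eq 0 (by lia)]
    simp
  have hsub : insert o (G.neighborFinset o) = X m ∪ X 0 ∪ X 1 := by
    refine insert_neighborFinset_eq_union (hdeg o) ho (hC.isNClique _ hclosed).isClique
      (h.isNClique 0 (by lia)).isClique ?_
    rw [card_union_of_disjoint, (hC.isNClique _ hclosed).card_eq, h.card_eq 1 (by lia)]
    exact disjoint_union_left.2 ⟨(h.disjoint m le_rfl 1 (by lia)).symm,
      h.disjoint 1 (by lia) 0 one_pos⟩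
  calc G.neighborFinset o ⊆ X m ∪ X 0 ∪ X 1 := hsub ▸ subset_insert _ _
    _ ⊆ C.sup id := union_subset (union_subset (h.subset_sup hC le_rfl)
      (h.subset_sup hC (by lia))) (h.subset_sup hC (by lia))

theorem IsMaximalPairChain.hasPivots_of_open (h : IsMaximalPairChain G C m X)
    (hC : IsCliqueComponent G 4 C) (hopen : X m ∪ X 0 ∉ C) : HasPivots G C := by
  have hm := h.three_le
  obtain hpar | hpar := Nat.even_or_odd m
  · rw [Nat.even_iff] at hpar
    refine ⟨X 1, h.nonempty (by lia), fun o ho => ⟨?_, ?_⟩⟩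
    · exact h.exists_isPivot hC hdeg hfree (by lia) ho (by lia) fun hcl => (hopen hcl).elim
    suffices G.neighborFinset o ⊆ C.sup id by
      rw [sdiff_eq_empty_iff_subset.2 this, h.card_eq 1 (by lia)]
      simp
    intro u hu
    obtain ⟨k, hk, huk, -⟩ := h.exists_mem_of_adj hdeg one_pos (by lia) ho (by simpa using hu)
    exact h.subset_sup hC hk huk
  · rw [Nat.odd_iff] at hpar
    refine ⟨X 0 ∪ X m, (h.nonempty (by lia)).inl, fun o ho => ⟨?_, ?_⟩⟩
    · obtain ho | ho := mem_union.1 ho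
      · exact h.exists_isPivot hC hdeg hfree (by lia) ho (by lia) fun hcl => (hopen hcl).elim
      · exact h.exists_isPivot hC hdeg hfree le_rfl ho (by lia) fun hcl => (hopen hcl).elim
    rw [card_union_of_disjoint (h.disjoint m le_rfl 0 (by lia)), h.card_eq 0 (by lia),
      h.card_eq m le_rfl]
    have hle := card_neighborFinset_sdiff_sup_add_le hC (v := o) <| by
      obtain ho | ho := mem_union.1 ho
      exacts [h.subset_sup hC (by lia) ho, h.subset_sup hC le_rfl ho]
    have := hdeg o
    lia

/-- A component in which meeting is not transitive is exhausted by a maximal chain of pairs, which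
may close up to a ring. -/
theorem IsCliqueComponent.hasPivots (hC : IsCliqueComponent G 4 C)
    (hring : ∀ n, Odd n → 5 ≤ n → ∀ Y : ZMod n → Finset V, ¬ IsCliqueRing G Y) :
    HasPivots G C := by
  by_cases htrans : ∀ Q ∈ C, ∀ Q' ∈ C, ¬ Disjoint Q Q'
  · exact hasPivots_of_pairwise_not_disjoint hfree hdeg le_rfl hC.nonempty hC.isNClique htrans
  obtain ⟨Q₁, h₁, Q₂, h₂, Q₃, h₃, h₁₂, h₂₃, h₁₃⟩ : ∃ Q₁ ∈ C, ∃ Q₂ ∈ C, ∃ Q₃ ∈ C,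
      ¬ Disjoint Q₁ Q₂ ∧ ¬ Disjoint Q₂ Q₃ ∧ Disjoint Q₁ Q₃ := by
    by_contra! hmeet
    refine htrans fun Q hQ Q' hQ' => hC.induction (p := fun Z => ¬ Disjoint Q Z) hQ ?_
      (fun Q₁ h₁ Q₂ h₂ hQQ₁ h₁₂ => hmeet Q hQ Q₁ h₁ Q₂ h₂ hQQ₁ h₁₂) hQ'
    rw [disjoint_self_iff_empty, ← card_eq_zero, (hC.isNClique Q hQ).card_eq]
    lia
  obtain ⟨X₀, hX₀, hX₀Q⟩ := exists_isPairChain_of_disjoint hdeg hfree (hC.isNClique _ h₁)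
    (hC.isNClique _ h₂) (hC.isNClique _ h₃) h₁₂ h₂₃ h₁₃
  obtain ⟨m, X, hX⟩ := exists_isMaximalPairChain hX₀ (hX₀Q ▸ h₁)
  by_cases hclosed : X m ∪ X 0 ∈ C
  · have hm := hX.three_le
    refine hX.hasPivots_of_closed hdeg hfree hC hclosed (Nat.not_even_iff_odd.1 fun hpar => ?_)
    refine hring (m + 1) hpar.add_one ?_ _ (hX.isCliqueRing (by lia) (hC.isNClique _ hclosed))
    rw [Nat.even_iff] at hpar
    lia
  · exact hX.hasPivots_of_open hdeg hfree hC hclosed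

theorem exists_isIndepSet_cliqueFreeOn_compl_four
    (hring : ∀ n, Odd n → 5 ≤ n → ∀ Y : ZMod n → Finset V, ¬ IsCliqueRing G Y) :
    ∃ J : Set V, G.IsIndepSet J ∧ G.CliqueFreeOn Jᶜ 4 :=
  exists_isIndepSet_cliqueFreeOn_compl fun _ hC => hC.hasPivots hdeg hfree hring

end CliqueFreeFive

end PairChains

/-! ### Good colourings -/

section Isolate

variable {V : Type*} {G : SimpleGraph V} {S : Set V} {t d : ℕ} {Q : Finset V} {u v : V}

/-- The graph obtained from `G` by deleting all edges meeting `S`. Keeping the vertices of `S`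
avoids a change of the vertex type. -/
def isolate (G : SimpleGraph V) (S : Set V) : SimpleGraph V where
  Adj u v := G.Adj u v ∧ u ∉ S ∧ v ∉ S
  symm := ⟨fun _ _ h => ⟨h.1.symm, h.2.2, h.2.1⟩⟩
  loopless := ⟨fun _ h => h.1.ne rfl⟩

theorem isolate_le : isolate G S ≤ G := fun _ _ h => h.1

theorem isNClique_isolate_iff (ht : 2 ≤ t) :
    (isolate G S).IsNClique t Q ↔ G.IsNClique t Q ∧ (Q : Set V) ⊆ Sᶜ := by
  refine ⟨fun h => ⟨h.mono isolate_le, fun v hv => ?_⟩, fun h => ⟨fun u hu v hv huv =>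
    ⟨h.1.isClique hu hv huv, h.2 hu, h.2 hv⟩, h.1.card_eq⟩⟩
  obtain ⟨u, hu, huv⟩ := Finset.exists_mem_ne (by rw [h.card_eq]; lia : 1 < #Q) v
  exact (h.isClique hv hu huv.symm).2.1

theorem cliqueFree_isolate (ht : 2 ≤ t) (h : G.CliqueFreeOn Sᶜ t) : (isolate G S).CliqueFree t :=
  fun _ hQ => h ((isNClique_isolate_iff ht).1 hQ).2 ((isNClique_isolate_iff ht).1 hQ).1

theorem degree_isolate_lt [Fintype V] (hu : u ∈ S) (hvu : G.Adj v u) :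
    (isolate G S).degree v < G.degree v := by
  rw [← card_neighborFinset_eq_degree, ← card_neighborFinset_eq_degree]
  refine card_lt_card ((ssubset_iff_of_subset fun x hx => ?_).2
    ⟨u, (G.mem_neighborFinset v u).2 hvu, fun h => ((mem_neighborFinset _ _ _).1 h).2.2 hu⟩)
  exact (G.mem_neighborFinset v x).2 ((mem_neighborFinset _ _ _).1 hx).1

theorem degree_isolate_le [Fintype V] (hdom : ∀ v ∉ S, ∃ u ∈ S, G.Adj v u)
    (hdeg : ∀ v, G.degree v ≤ d + 1) (v : V) : (isolate G S).degree v ≤ d := by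
  by_cases hv : v ∈ S
  · have hiso : (isolate G S).neighborFinset v = ∅ :=
      eq_empty_of_forall_notMem fun u hu => ((mem_neighborFinset _ _ _).1 hu).2.1 hv
    rw [← card_neighborFinset_eq_degree, hiso]
    exact d.zero_le
  · obtain ⟨u, hu, hvu⟩ := hdom v hv
    exact Nat.le_of_lt_succ ((degree_isolate_lt hu hvu).trans_le (hdeg v))

theorem exists_isIndepSet_dominating [Finite V] {J : Set V} (hJ : G.IsIndepSet J) :
    ∃ I, J ⊆ I ∧ G.IsIndepSet I ∧ ∀ v ∉ I, ∃ u ∈ I, G.Adj v u := by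
  obtain ⟨I, hJI, hI⟩ := Set.toFinite {I | G.IsIndepSet I} |>.exists_le_maximal hJ
  refine ⟨I, hJI, hI.prop, fun v hv => ?_⟩
  by_contra! hnadj
  refine hv (hI.le_of_ge (y := insert v I) ?_ (Set.subset_insert v I) (Set.mem_insert v I))
  exact hI.prop.insert fun u hu _ => ⟨hnadj u hu, fun h => hnadj u hu h.symm⟩

end Isolate

section GoodColoring

variable {V α β : Type*} {G G' : SimpleGraph V} {f : V → Option α}

/-- A partial colouring of the vertices, `none` meaning uncoloured, whose colour classes are
independent and whose set of uncoloured vertices contains no `4`-clique. -/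
structure IsGoodColoring (G : SimpleGraph V) (f : V → Option α) : Prop where
  eq_none_of_adj : ∀ u v, G.Adj u v → f u = f v → f u = none
  cliqueFreeOn : G.CliqueFreeOn {v | f v = none} 4

theorem IsGoodColoring.anti (hf : IsGoodColoring G f) (h : G' ≤ G) : IsGoodColoring G' f :=
  ⟨fun u v huv => hf.eq_none_of_adj u v (h huv), fun _ hQ hclique =>
    hf.cliqueFreeOn hQ (hclique.mono h)⟩

theorem IsGoodColoring.of_cliqueFree (h : G.CliqueFree 4) :
    IsGoodColoring G fun _ => (none : Option α) :=
  ⟨fun _ _ _ _ => rfl, h.cliqueFreeOn⟩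

theorem IsGoodColoring.exists_of_card_le [Fintype α] [Fintype β] (hf : IsGoodColoring G f)
    (h : Fintype.card α ≤ Fintype.card β) : ∃ g : V → Option β, IsGoodColoring G g := by
  obtain ⟨e⟩ := Function.Embedding.nonempty_of_card_le h
  refine ⟨fun v => (f v).map e, fun u v huv he => ?_, by simpa using hf.cliqueFreeOn⟩
  rw [hf.eq_none_of_adj u v huv (Option.map_injective e.injective he), Option.map_none]

theorem IsGoodColoring.insertColor {I : Set V} (hI : G.IsIndepSet I)
    (hf : IsGoodColoring (isolate G I) f) :
    IsGoodColoring G fun v => if v ∈ I then some none else (f v).map some where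
  eq_none_of_adj u v huv h := by
    by_cases hu : u ∈ I <;> by_cases hv : v ∈ I
    · exact (hI hu hv huv.ne huv).elim
    · simp [hu, hv] at h
    · simp [hu, hv] at h
    · simp only [hu, hv, if_false] at h ⊢
      rw [hf.eq_none_of_adj u v ⟨huv, hu, hv⟩ (Option.map_injective (Option.some_injective α) h),
        Option.map_none]
  cliqueFreeOn Q hQ hclique := by
    have hQI (v) (hv : v ∈ Q) : v ∉ I ∧ f v = none := by
      have hnone : (if v ∈ I then some none else (f v).map some) = none := hQ hv
      by_cases hvI : v ∈ I
      · simp [hvI] at hnone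
      · exact ⟨hvI, by simpa [hvI] using hnone⟩
    exact hf.cliqueFreeOn (fun v hv => (hQI v hv).2)
      ((isNClique_isolate_iff (by lia)).2 ⟨hclique, fun v hv => (hQI v hv).1⟩)

end GoodColoring

/-! ### Colour patterns on a cycle -/

section Patterns

theorem zmod_natCast_ne_zero {n k : ℕ} (h₀ : k ≠ 0) (hk : k < n) : (k : ZMod n) ≠ 0 := fun h =>
  h₀ (Nat.eq_zero_of_dvd_of_lt ((ZMod.natCast_eq_zero_iff k n).1 h) hk)

variable {n : ℕ} [NeZero n]

theorem zmod_val_add_one {a : ZMod n} (h : a + 1 ≠ 0) : (a + 1).val = a.val + 1 := by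
  have hne : a.val + 1 ≠ n := by
    intro heq
    apply h
    rw [← ZMod.natCast_zmod_val a, ← Nat.cast_succ, Nat.succ_eq_add_one, heq, ZMod.natCast_self]
  have hlt : a.val + 1 < n := lt_of_le_of_ne (ZMod.val_lt a) hne
  rw [← ZMod.val_cast_of_lt hlt, Nat.cast_add, Nat.cast_one, ZMod.natCast_zmod_val]

theorem exists_iff_add_one (hn : Odd n) (P : ZMod n → Prop) : ∃ i, P i ↔ P (i + 1) := by
  by_contra! hP
  have hiff (k : ℕ) : P k ↔ (P 0 ↔ Even k) := by
    induction k with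
    | zero => simp
    | succ k ih =>
      have := hP k
      rw [Nat.cast_succ, Nat.even_add_one]
      tauto
  have hn' := hiff n
  rw [ZMod.natCast_self] at hn'
  have := Nat.not_even_iff_odd.2 hn
  tauto

theorem exists_alternating {E : Set (ZMod n)} (hne : E.Nonempty) (hE : ∀ i ∈ E, i + 1 ∉ E) :
    ∃ σ : ZMod n → Option Bool, (∀ i, σ i = none ↔ i ∈ E) ∧ ∀ i, σ i ≠ σ (i + 1) := by
  obtain ⟨e, he⟩ := hne
  refine ⟨fun i => if i ∈ E then none else some (i - e).val.bodd, fun i => by simp, fun i => ?_⟩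
  by_cases hi : i ∈ E
  · simp [hi, hE i hi]
  by_cases hi' : i + 1 ∈ E
  · simp [hi, hi']
  have hval : (i + 1 - e).val = (i - e).val + 1 := by
    have hne : i - e + 1 ≠ 0 := fun h => hi' (by
      rwa [show i + 1 = e by linear_combination h])
    rw [add_sub_right_comm, zmod_val_add_one hne]
  simp [hi, hi', hval]

theorem exists_alternating_around (hn : 4 ≤ n) (i : ZMod n) :
    ∃ σ : ZMod n → Option Bool, (∀ j, σ j = none ↔ j = i - 1 ∨ j = i + 1) ∧ σ i ≠ none ∧
      ∀ j, σ j ≠ σ (j + 1) := by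
  have h₁ := zmod_natCast_ne_zero (n := n) (k := 1) (by lia) (by lia)
  have h₃ := zmod_natCast_ne_zero (n := n) (k := 3) (by lia) (by lia)
  push_cast at h₁ h₃
  obtain ⟨σ, hσ, hne⟩ := exists_alternating (E := {j | j = i - 1 ∨ j = i + 1})
    ⟨i - 1, Or.inl rfl⟩ (by
      rintro _ (rfl | rfl) (h | h)
      · exact h₁ (by linear_combination h)
      · exact h₁ (by linear_combination -h)
      · exact h₃ (by linear_combination h)
      · exact h₁ (by linear_combination h))
  refine ⟨σ, hσ, fun hi => ?_, hne⟩
  rcases (hσ i).1 hi with h | h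
  · exact h₁ (by linear_combination h)
  · exact h₁ (by linear_combination -h)

theorem exists_next_color {A : Set Bool} (hA : A.Nonempty) (o : Option Bool) :
    ∃ o' ≠ o, (∀ a, o' = some a → a ∈ A) ∧ (o' = none → ∃ a, a ∉ A) := by
  obtain ⟨a, ha⟩ := hA
  rcases o with _ | b
  · exact ⟨some a, by simp, by simpa using ha, by simp⟩
  by_cases hb : (!b) ∈ A
  · exact ⟨some !b, by simp, fun a ha => Option.some_injective _ ha ▸ hb, by simp⟩
  · exact ⟨none, by simp, by simp, fun _ => ⟨_, hb⟩⟩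

theorem exists_greedy_seq {A : ℕ → Set Bool} (hA : ∀ k, (A k).Nonempty) {c : Bool} (hc : c ∈ A 0) :
    ∃ s : ℕ → Option Bool, s 0 = some c ∧ (∀ k, s k ≠ s (k + 1)) ∧
      (∀ k a, s k = some a → a ∈ A k) ∧ ∀ k, s k = none → ∃ a, a ∉ A k := by
  choose next hne hmem hnone using fun k => exists_next_color (hA k)
  let s : ℕ → Option Bool := fun k => k.rec (some c) fun k => next (k + 1)
  refine ⟨s, rfl, fun k => (hne _ _).symm, fun k => ?_, fun k => ?_⟩
  · cases k with
    | zero => simpa [s] using hc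
    | succ k => exact hmem _ _
  · cases k with
    | zero => simp [s]
    | succ k => exact hnone _ _

/-- Colour greedily around the cycle, starting with `c` at `i + 1` and ending at `i`, where `c` is
forbidden: hence there is no conflict where the cycle closes. -/
theorem exists_greedy {A : ZMod n → Set Bool} (hA : ∀ i, (A i).Nonempty) {c : Bool} {i : ZMod n}
    (hi : c ∉ A i) (hi' : c ∈ A (i + 1)) :
    ∃ σ : ZMod n → Option Bool, (∀ j, σ j ≠ σ (j + 1)) ∧ (∀ j a, σ j = some a → a ∈ A j) ∧
      ∀ j, σ j = none → ∃ a, a ∉ A j := by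
  obtain ⟨s, hs₀, hs, hmem, hnone⟩ := exists_greedy_seq (A := fun k => A (i + 1 + k))
    (fun k => hA _) (c := c) (by simpa using hi')
  have hindex (j : ZMod n) : i + 1 + ((j - (i + 1)).val : ℕ) = j := by simp
  refine ⟨fun j => s (j - (i + 1)).val, fun j => ?_, fun j a hj => ?_, fun j hj => ?_⟩
  · by_cases hj : j - (i + 1) + 1 = 0
    · obtain rfl : j = i := by linear_combination hj
      have hlast : s (j - (j + 1)).val ≠ some c := fun h => hi (hindex j ▸ hmem _ _ h)
      simpa [hs₀] using hlast
    · beta_reduce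
      rw [add_sub_right_comm, zmod_val_add_one hj]
      exact hs _
  · exact hindex j ▸ hmem _ _ hj
  · exact hindex j ▸ hnone _ hj

end Patterns

/-! ### Colouring a ring of pairs -/

theorem mem_or_mem_of_card_le {V : Type*} {s t : Finset V} {a b : V} (hst : s ⊆ t)
    (hcard : #t ≤ #s + 1) (ha : a ∈ t) (hb : b ∈ t) (hab : a ≠ b) : a ∈ s ∨ b ∈ s := by
  by_contra! h
  have hsub : {a, b} ∪ s ⊆ t := union_subset (by grind) hst
  have hle := card_le_card hsub
  rw [card_union_of_disjoint (by grind), card_pair hab] at hle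
  lia

theorem card_three_consecutive {V : Type*} {n : ℕ} {Y : ZMod n → Finset V}
    (hcard : ∀ i, #(Y i) = 2) (hdisj : ∀ i j, i ≠ j → Disjoint (Y i) (Y j)) (hn : 3 ≤ n)
    (i : ZMod n) : #(Y (i - 1) ∪ Y i ∪ Y (i + 1)) = 6 := by
  have h₁ := zmod_natCast_ne_zero (n := n) (k := 1) (by lia) (by lia)
  have h₂ := zmod_natCast_ne_zero (n := n) (k := 2) (by lia) (by lia)
  push_cast at h₁ h₂
  rw [card_union_of_disjoint (disjoint_union_left.2 ⟨hdisj _ _ fun he => h₂ ?_,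
    hdisj _ _ fun he => h₁ ?_⟩), card_union_of_disjoint (hdisj _ _ fun he => h₁ ?_),
    hcard, hcard, hcard]
  all_goals linear_combination -he

/-- The vertices of a ring of pairs. -/
def ringSet {V : Type*} {n : ℕ} (Y : ZMod n → Finset V) : Set V := {v | ∃ i, v ∈ Y i}

/-- A ring of pairwise disjoint pairs `Y i` in which every vertex `v` has exactly one neighbour
`w v` outside the ring, and all its other neighbours in its own pair and the two adjacent ones. -/
structure IsPendantRing {V : Type*} {n : ℕ} (G : SimpleGraph V) (Y : ZMod n → Finset V)
    (w : V → V) : Prop where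
  card_eq : ∀ i, #(Y i) = 2
  disjoint : ∀ i j, i ≠ j → Disjoint (Y i) (Y j)
  notMem : ∀ i, ∀ v ∈ Y i, w v ∉ ringSet Y
  adj : ∀ i, ∀ v ∈ Y i, G.Adj v (w v)
  mem_or_eq_of_adj : ∀ i, ∀ v ∈ Y i, ∀ u, G.Adj v u →
    u ∈ Y (i - 1) ∪ Y i ∪ Y (i + 1) ∨ u = w v

namespace IsPendantRing

variable {V α : Type*} {n : ℕ} {G : SimpleGraph V} {Y : ZMod n → Finset V} {w : V → V}
  {f g : V → Option α} {i j : ZMod n} {u v : V} {Q : Finset V}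

theorem eq_of_mem (h : IsPendantRing G Y w) (hi : v ∈ Y i) (hj : v ∈ Y j) : i = j := by
  by_contra hij
  exact disjoint_left.1 (h.disjoint i j hij) hi hj

theorem exists_subset_of_isClique (h : IsPendantRing G Y w) (hn : 4 ≤ n)
    (hQ : G.IsClique (Q : Set V)) (hne : Q.Nonempty) (hring : (Q : Set V) ⊆ ringSet Y) :
    ∃ i, Q ⊆ Y i ∪ Y (i + 1) := by
  have hsub (i) (v) (hv : v ∈ Q) (hi : v ∈ Y i) : Q ⊆ Y (i - 1) ∪ Y i ∪ Y (i + 1) := by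
    intro u hu
    obtain rfl | huv := eq_or_ne v u
    · simp [hi]
    · refine (h.mem_or_eq_of_adj i v hi u (hQ hv hu huv)).resolve_right ?_
      rintro rfl
      exact h.notMem i v hi (hring hu)
  obtain ⟨v, hv⟩ := hne
  obtain ⟨i, hi⟩ := hring hv
  by_cases hprev : ∃ u ∈ Q, u ∈ Y (i - 1)
  · obtain ⟨u, hu, hui⟩ := hprev
    have h₁ := zmod_natCast_ne_zero (n := n) (k := 1) (by lia) (by lia)
    have h₂ := zmod_natCast_ne_zero (n := n) (k := 2) (by lia) (by lia)
    have h₃ := zmod_natCast_ne_zero (n := n) (k := 3) (by lia) (by lia)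
    push_cast at h₁ h₂ h₃
    refine ⟨i - 1, fun x hx => ?_⟩
    have hx₁ := hsub i v hv hi hx
    have hx₂ := hsub _ u hu hui hx
    simp only [mem_union, sub_add_cancel] at hx₁ hx₂ ⊢
    refine hx₁.resolve_right fun hxi => ?_
    rcases hx₂ with (hx₂ | hx₂) | hx₂
    · exact h₃ (by linear_combination h.eq_of_mem hxi hx₂)
    · exact h₂ (by linear_combination h.eq_of_mem hxi hx₂)
    · exact h₁ (by linear_combination h.eq_of_mem hxi hx₂)
  · push Not at hprev
    refine ⟨i, fun x hx => ?_⟩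
    have hxi := hsub i v hv hi hx
    simp only [mem_union] at hxi ⊢
    grind

theorem card_union (h : IsPendantRing G Y w) (hn : 4 ≤ n) (i : ZMod n) :
    #(Y i ∪ Y (i + 1)) = 4 := by
  have h₁ := zmod_natCast_ne_zero (n := n) (k := 1) (by lia) (by lia)
  rw [card_union_of_disjoint (h.disjoint _ _ (by simpa using h₁)), h.card_eq, h.card_eq]

theorem eq_pendant_of_adj (h : IsPendantRing G Y w) (hi : v ∈ Y i) (hu : u ∉ ringSet Y)
    (hvu : G.Adj v u) : w v = u := by
  rcases h.mem_or_eq_of_adj i v hi u hvu with hmem | rfl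
  · simp only [mem_union] at hmem
    rcases hmem with (hmem | hmem) | hmem <;> exact (hu ⟨_, hmem⟩).elim
  · rfl

theorem eq_union_or_subset_of_isNClique (h : IsPendantRing G Y w) (hn : 4 ≤ n)
    (hQ : G.IsNClique 4 Q) (hv : v ∈ Q) (hvY : v ∈ ringSet Y) :
    ∃ i, Q = Y i ∪ Y (i + 1) ∨
      ∃ x ∈ Q, x ∉ ringSet Y ∧ ∀ u ∈ Q, u ≠ x → u ∈ Y i ∪ Y (i + 1) ∧ w u = x := by
  obtain ⟨i, hi⟩ := h.exists_subset_of_isClique hn (Q := {u ∈ Q | u ∈ ringSet Y})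
    (hQ.isClique.subset (coe_subset.2 (filter_subset _ _))) ⟨v, by simp [hv, hvY]⟩
    (fun u hu => (mem_filter.1 hu).2)
  refine ⟨i, ?_⟩
  by_cases hx : ∃ x ∈ Q, x ∉ ringSet Y
  · obtain ⟨x, hxQ, hx⟩ := hx
    have hpendant (u) (hu : u ∈ Q) (huY : u ∈ ringSet Y) (y) (hy : y ∈ Q) (hyY : y ∉ ringSet Y) :
        w u = y := by
      obtain ⟨j, hj⟩ := huY
      exact h.eq_pendant_of_adj hj hyY (hQ.isClique hu hy (by rintro rfl; exact hyY ⟨j, hj⟩))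
    refine Or.inr ⟨x, hxQ, hx, fun u hu hux => ?_⟩
    have huY : u ∈ ringSet Y := by
      by_contra huY
      exact hux ((hpendant v hv hvY u hu huY).symm.trans (hpendant v hv hvY x hxQ hx))
    exact ⟨hi (mem_filter.2 ⟨hu, huY⟩), hpendant u hu huY x hxQ hx⟩
  · push Not at hx
    refine Or.inl (eq_of_subset_of_card_le (fun u hu => hi (mem_filter.2 ⟨hu, hx u hu⟩)) ?_)
    rw [h.card_union hn, hQ.card_eq]

theorem eq_none_of_adj_of_mem (h : IsPendantRing G Y w) (hgf : ∀ v ∉ ringSet Y, g v = f v)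
    (hpendant : ∀ i, ∀ v ∈ Y i, g v = f (w v) → g v = none)
    (hring : ∀ i, ∀ u ∈ Y i, ∀ v ∈ Y i ∪ Y (i + 1), u ≠ v → g u = g v → g u = none)
    {u v : V} (hu : u ∈ ringSet Y) (huv : G.Adj u v) (he : g u = g v) : g u = none := by
  obtain ⟨i, hu⟩ := hu
  rcases h.mem_or_eq_of_adj i u hu v huv with hv | rfl
  · rw [union_assoc, mem_union] at hv
    rcases hv with hv | hv
    · exact he.trans (hring _ v hv u (by simp [hu]) huv.ne' he.symm)
    · exact hring i u hu v hv huv.ne he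
  · exact hpendant i u hu (he.trans (hgf _ (h.notMem i u hu)))

theorem isGoodColoring (h : IsPendantRing G Y w) (hn : 4 ≤ n)
    (hf : IsGoodColoring (isolate G (ringSet Y)) f) (hgf : ∀ v ∉ ringSet Y, g v = f v)
    (hpendant : ∀ i, ∀ v ∈ Y i, g v = f (w v) → g v = none)
    (hring : ∀ i, ∀ u ∈ Y i, ∀ v ∈ Y i ∪ Y (i + 1), u ≠ v → g u = g v → g u = none)
    (hpair : ∀ i, ∃ v ∈ Y i ∪ Y (i + 1), g v ≠ none)
    (htriple : ∀ i x, f x = none → ∃ u ∈ Y i ∪ Y (i + 1), ∃ v ∈ Y i ∪ Y (i + 1), u ≠ v ∧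
      (g u = none → w u ≠ x) ∧ (g v = none → w v ≠ x)) : IsGoodColoring G g := by
  constructor
  · intro u v huv he
    by_cases hu : u ∈ ringSet Y
    · exact h.eq_none_of_adj_of_mem hgf hpendant hring hu huv he
    by_cases hv : v ∈ ringSet Y
    · exact he.trans (h.eq_none_of_adj_of_mem hgf hpendant hring hv huv.symm he.symm)
    rw [hgf u hu]
    rw [hgf u hu, hgf v hv] at he
    exact hf.eq_none_of_adj u v ⟨huv, hu, hv⟩ he
  intro Q hQnone hQ
  by_cases hQY : ∃ v ∈ Q, v ∈ ringSet Y
  · obtain ⟨v, hv, hvY⟩ := hQY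
    obtain ⟨i, rfl | ⟨x, hxQ, hxY, hQx⟩⟩ := h.eq_union_or_subset_of_isNClique hn hQ hv hvY
    · obtain ⟨u, hu, hgu⟩ := hpair i
      exact hgu (hQnone hu)
    · obtain ⟨a, ha, b, hb, hab, ha', hb'⟩ := htriple i x (hgf x hxY ▸ hQnone hxQ)
      have hle : #(Y i ∪ Y (i + 1)) ≤ #(Q.erase x) + 1 := by
        rw [card_erase_of_mem hxQ, hQ.card_eq, h.card_union hn]
      have hsub : Q.erase x ⊆ Y i ∪ Y (i + 1) := fun u hu =>
        (hQx u (mem_of_mem_erase hu) (ne_of_mem_erase hu)).1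
      have hw (u) (hu : u ∈ Q.erase x) : w u = x :=
        (hQx u (mem_of_mem_erase hu) (ne_of_mem_erase hu)).2
      rcases mem_or_mem_of_card_le hsub hle ha hb hab with haQ | hbQ
      · exact ha' (hQnone (mem_of_mem_erase haQ)) (hw a haQ)
      · exact hb' (hQnone (mem_of_mem_erase hbQ)) (hw b hbQ)
  · push Not at hQY
    refine hf.cliqueFreeOn (fun v hv => ?_) ((isNClique_isolate_iff (by lia)).2 ⟨hQ, hQY⟩)
    exact (hgf v (hQY v hv)).symm.trans (hQnone hv)

end IsPendantRing

/-- A recipe for extending a partial colouring `f` to a ring of pairs: `y i ∈ Y i` receives the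
colour `σ i`, the other vertex of `Y i` receives `τ i`. The last two fields prevent uncoloured
triples of `Y i ∪ Y (i + 1)` with a common uncoloured neighbour outside the ring. -/
structure IsRingPattern {V α : Type*} {n : ℕ} (Y : ZMod n → Finset V) (w : V → V)
    (f : V → Option α) (y : ZMod n → V) (σ τ : ZMod n → Option α) : Prop where
  mem : ∀ i, y i ∈ Y i
  ne : ∀ i, σ i ≠ σ (i + 1)
  eq_none_of_eq : ∀ i, σ i = τ i → τ i = none
  eq_none_right : ∀ i, τ i ≠ none → σ (i + 1) = none
  eq_none_left : ∀ i, τ (i + 1) ≠ none → σ i = none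
  pendant : ∀ i, σ i = f (w (y i)) → σ i = none
  pendant' : ∀ i, ∀ v ∈ Y i, τ i = f (w v) → τ i = none
  triple_left : ∀ i x, f x = none → σ i = none → τ (i + 1) = none →
    ∃ v ∈ Y i ∪ Y (i + 1), v ≠ y (i + 1) ∧ w v ≠ x
  triple_right : ∀ i x, f x = none → σ (i + 1) = none → τ i = none →
    ∃ v ∈ Y i ∪ Y (i + 1), v ≠ y i ∧ w v ≠ x

section Patterns

variable {V α : Type*} {n : ℕ} {G : SimpleGraph V} {Y : ZMod n → Finset V} {w : V → V}
  {f g : V → Option α} {y : ZMod n → V} {σ τ : ZMod n → Option α} {i : ZMod n} {u v x : V}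

theorem IsPendantRing.exists_extension (h : IsPendantRing G Y w) (hy : ∀ i, y i ∈ Y i)
    (f : V → Option α) (σ τ : ZMod n → Option α) :
    ∃ g : V → Option α, (∀ v ∉ ringSet Y, g v = f v) ∧ (∀ i, g (y i) = σ i) ∧
      ∀ i, ∀ v ∈ Y i, v ≠ y i → g v = τ i := by
  let g (v : V) : Option α := if hv : v ∈ ringSet Y then
    if v = y hv.choose then σ hv.choose else τ hv.choose else f v
  have hg (i) (v) (hvi : v ∈ Y i) : g v = if v = y i then σ i else τ i := by
    have hv : v ∈ ringSet Y := ⟨i, hvi⟩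
    simp only [g, hv, dif_pos, h.eq_of_mem hv.choose_spec hvi]
  refine ⟨g, fun v hv => dif_neg hv, fun i => ?_, fun i v hv hne => ?_⟩
  · rw [hg i _ (hy i), if_pos rfl]
  · rw [hg i v hv, if_neg hne]

namespace IsRingPattern

theorem eq_none_of_mem_pair (hp : IsRingPattern Y w f y σ τ) (h : IsPendantRing G Y w)
    (hgy : ∀ i, g (y i) = σ i) (hgτ : ∀ i, ∀ v ∈ Y i, v ≠ y i → g v = τ i) (hu : u ∈ Y i)
    (hv : v ∈ Y i) (huv : u ≠ v) (he : g u = g v) : g u = none := by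
  have hle : #(Y i) ≤ #{y i} + 1 := by simp [h.card_eq]
  obtain huy | hvy : u = y i ∨ v = y i := by
    simpa using mem_or_mem_of_card_le (by simpa using hp.mem i) hle hu hv huv
  · subst huy
    rw [hgy, hgτ i v hv huv.symm] at he
    rw [hgy, he, hp.eq_none_of_eq i he]
  · subst hvy
    rw [hgy, hgτ i u hu huv] at he
    rw [hgτ i u hu huv, hp.eq_none_of_eq i he.symm]

theorem eq_none_of_mem_add_one (hp : IsRingPattern Y w f y σ τ)
    (hgy : ∀ i, g (y i) = σ i) (hgτ : ∀ i, ∀ v ∈ Y i, v ≠ y i → g v = τ i) (hu : u ∈ Y i)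
    (hv : v ∈ Y (i + 1)) (he : g u = g v) : g u = none := by
  by_contra hne
  have hne' : g v ≠ none := he ▸ hne
  by_cases huy : u = y i <;> by_cases hvy : v = y (i + 1)
  · rw [huy, hvy, hgy, hgy] at he
    exact hp.ne i he
  · rw [huy, hgy] at hne
    rw [hgτ _ v hv hvy] at hne'
    exact hne (hp.eq_none_left i hne')
  · rw [hvy, hgy] at hne'
    rw [hgτ _ u hu huy] at hne
    exact hne' (hp.eq_none_right i hne)
  · rw [hgτ _ u hu huy] at hne
    rw [hgτ _ v hv hvy] at hne'
    exact hp.ne i ((hp.eq_none_left i hne').trans (hp.eq_none_right i hne).symm)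

theorem exists_pair_excluded (hp : IsRingPattern Y w f y σ τ) (h : IsPendantRing G Y w)
    (hgy : ∀ i, g (y i) = σ i) (hgτ : ∀ i, ∀ v ∈ Y i, v ≠ y i → g v = τ i) (hn : 4 ≤ n)
    (hx : f x = none) :
    ∃ u ∈ Y i ∪ Y (i + 1), ∃ v ∈ Y i ∪ Y (i + 1), u ≠ v ∧
      (g u = none → w u ≠ x) ∧ (g v = none → w v ≠ x) := by
  have of_ne_none (j) (hj : Y j ⊆ Y i ∪ Y (i + 1)) (hσ : σ j ≠ none)
      (hτ : τ j = none → ∃ v ∈ Y i ∪ Y (i + 1), v ≠ y j ∧ w v ≠ x) :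
      ∃ u ∈ Y i ∪ Y (i + 1), ∃ v ∈ Y i ∪ Y (i + 1), u ≠ v ∧
        (g u = none → w u ≠ x) ∧ (g v = none → w v ≠ x) := by
    refine ⟨y j, hj (hp.mem j), ?_⟩
    by_cases hτj : τ j = none
    · obtain ⟨v, hv, hvy, hwv⟩ := hτ hτj
      exact ⟨v, hv, hvy.symm, fun hnone => (hσ (hgy j ▸ hnone)).elim, fun _ => hwv⟩
    · obtain ⟨v, hv, hvy⟩ := Finset.exists_mem_ne (by rw [h.card_eq]; lia : 1 < #(Y j)) (y j)
      exact ⟨v, hj hv, hvy.symm, fun hnone => (hσ (hgy j ▸ hnone)).elim,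
        fun hnone => (hτj (hgτ j v hv hvy ▸ hnone)).elim⟩
  by_cases hi : σ i = none
  · exact of_ne_none (i + 1) subset_union_right (hi ▸ (hp.ne i).symm) (hp.triple_left i x hx hi)
  by_cases hi' : σ (i + 1) = none
  · exact of_ne_none i subset_union_left hi (hp.triple_right i x hx hi')
  have h₁ := zmod_natCast_ne_zero (n := n) (k := 1) (by lia) (by lia)
  refine ⟨y i, mem_union_left _ (hp.mem i), y (i + 1), mem_union_right _ (hp.mem _), ?_,
    fun hnone => (hi (hgy _ ▸ hnone)).elim, fun hnone => (hi' (hgy _ ▸ hnone)).elim⟩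
  intro he
  have hi_eq : i = i + 1 := h.eq_of_mem (hp.mem i) (he ▸ hp.mem (i + 1))
  exact h₁ (by linear_combination -hi_eq)

theorem exists_isGoodColoring (hp : IsRingPattern Y w f y σ τ) (h : IsPendantRing G Y w)
    (hn : 4 ≤ n) (hf : IsGoodColoring (isolate G (ringSet Y)) f) :
    ∃ g : V → Option α, IsGoodColoring G g := by
  obtain ⟨g, hgf, hgy, hgτ⟩ := h.exists_extension hp.mem f σ τ
  refine ⟨g, h.isGoodColoring hn hf hgf (fun i v hv he => ?_) (fun i u hu v hv huv he => ?_)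
    (fun i => ?_) fun i x hx => hp.exists_pair_excluded h hgy hgτ hn hx⟩
  · by_cases hvy : v = y i
    · subst hvy
      rw [hgy] at he ⊢
      exact hp.pendant i he
    · rw [hgτ i v hv hvy] at he ⊢
      exact hp.pendant' i v hv he
  · rcases mem_union.1 hv with hv | hv
    · exact hp.eq_none_of_mem_pair h hgy hgτ hu hv huv he
    · exact hp.eq_none_of_mem_add_one hgy hgτ hu hv he
  · by_cases hi : σ i = none
    · exact ⟨y (i + 1), mem_union_right _ (hp.mem _), hgy (i + 1) ▸ hi ▸ (hp.ne i).symm⟩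
    · exact ⟨y i, mem_union_left _ (hp.mem i), hgy i ▸ hi⟩

end IsRingPattern

/-- The colours that may be given to some vertex of `B` without conflict with the colours of the
neighbours outside the ring. -/
def allowedColors (f : V → Option α) (w : V → V) (B : Finset V) : Set α :=
  {c | ∃ v ∈ B, f (w v) ≠ some c}

/-- All of `B` is joined to one uncoloured vertex outside the ring. -/
def HasUncoloredApex (f : V → Option α) (w : V → V) (B : Finset V) : Prop :=
  ∃ x, f x = none ∧ ∀ v ∈ B, w v = x

theorem exists_mem_avoiding_apex {A B : Finset V} (hA : A.Nonempty) (hB : 1 < #B)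
    (hAB : Disjoint A B) (hapex : ¬ HasUncoloredApex f w (A ∪ B)) {c : α}
    (hc : c ∈ allowedColors f w B) :
    ∃ y ∈ B, f (w y) ≠ some c ∧ ∀ x, f x = none → ∃ v ∈ A ∪ B, v ≠ y ∧ w v ≠ x := by
  obtain ⟨y, hy, hyc⟩ := hc
  by_cases hAapex : HasUncoloredApex f w A
  swap
  · simp only [HasUncoloredApex, not_exists, not_and, not_forall, exists_prop] at hAapex
    refine ⟨y, hy, hyc, fun x hx => ?_⟩
    obtain ⟨v, hv, hvx⟩ := hAapex x hx
    exact ⟨v, mem_union_left _ hv, fun h => disjoint_left.1 hAB hv (h ▸ hy), hvx⟩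
  obtain ⟨x₀, hx₀, hwA⟩ := hAapex
  obtain ⟨a, ha⟩ := hA
  have of_apex (y) (hy : y ∈ B) (hv : ∃ v ∈ A ∪ B, v ≠ y ∧ w v ≠ x₀) (x) :
      ∃ v ∈ A ∪ B, v ≠ y ∧ w v ≠ x := by
    by_cases hx : x = x₀
    · exact hx ▸ hv
    · exact ⟨a, mem_union_left _ ha, fun h => disjoint_left.1 hAB ha (h ▸ hy),
        hwA a ha ▸ Ne.symm hx⟩
  by_cases hz : ∃ z ∈ B, w z = x₀
  · obtain ⟨z, hz, hwz⟩ := hz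
    refine ⟨z, hz, by simp [hwz, hx₀], fun x _ => of_apex z hz ?_ x⟩
    by_contra! hall
    refine hapex ⟨x₀, hx₀, fun v hv => ?_⟩
    by_cases hvz : v = z
    · rw [hvz, hwz]
    · exact hall v hv hvz
  · push Not at hz
    obtain ⟨b, hb, hby⟩ := Finset.exists_mem_ne hB y
    exact ⟨y, hy, hyc, fun x _ => of_apex y hy ⟨b, mem_union_right _ hb, hby, hz b hb⟩ x⟩

end Patterns

namespace IsPendantRing

variable {V : Type*} {n : ℕ} {G : SimpleGraph V} {Y : ZMod n → Finset V} {w : V → V}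
  {f : V → Option Bool} {i : ZMod n}

theorem nonempty (h : IsPendantRing G Y w) (i : ZMod n) : (Y i).Nonempty :=
  card_pos.1 (by simp [h.card_eq])

theorem nonempty_allowedColors (h : IsPendantRing G Y w) (f : V → Option Bool) (i : ZMod n) :
    (allowedColors f w (Y i)).Nonempty := by
  obtain ⟨v, hv⟩ := h.nonempty i
  by_cases hfv : f (w v) = some true
  · exact ⟨false, v, hv, by simp [hfv]⟩
  · exact ⟨true, v, hv, hfv⟩

theorem exists_mem_forall_ne_some (h : IsPendantRing G Y w) {o : Option Bool}
    (ho : ∀ c, o = some c → c ∈ allowedColors f w (Y i)) :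
    ∃ v ∈ Y i, ∀ c, o = some c → f (w v) ≠ some c := by
  cases o with
  | none => simpa using (h.nonempty i).exists_mem
  | some c => simpa [allowedColors] using ho c rfl

/-- One vertex in each pair suffices: `τ` is `none` throughout. -/
theorem exists_isGoodColoring_of_single {y : ZMod n → V} {σ : ZMod n → Option Bool}
    (h : IsPendantRing G Y w) (hn : 4 ≤ n) (hf : IsGoodColoring (isolate G (ringSet Y)) f)
    (hy : ∀ i, y i ∈ Y i) (hσ : ∀ i, σ i ≠ σ (i + 1))
    (hpendant : ∀ i c, σ i = some c → f (w (y i)) ≠ some c)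
    (hleft : ∀ i x, f x = none → σ i = none → ∃ v ∈ Y i ∪ Y (i + 1), v ≠ y (i + 1) ∧ w v ≠ x)
    (hright : ∀ i x, f x = none → σ (i + 1) = none → ∃ v ∈ Y i ∪ Y (i + 1), v ≠ y i ∧ w v ≠ x) :
    ∃ g : V → Option Bool, IsGoodColoring G g := by
  refine IsRingPattern.exists_isGoodColoring (τ := fun _ => none) (σ := σ) (y := y) ?_ h hn hf
  exact {
    mem := hy
    ne := hσ
    eq_none_of_eq _ _ := rfl
    eq_none_right _ hne := (hne rfl).elim
    eq_none_left _ hne := (hne rfl).elim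
    pendant i he := by
      by_contra hne
      obtain ⟨c, hc⟩ := Option.ne_none_iff_exists'.1 hne
      exact hpendant i c hc (he ▸ hc)
    pendant' _ _ _ _ := rfl
    triple_left i x hx hi _ := hleft i x hx hi
    triple_right i x hx hi _ := hright i x hx hi }

theorem exists_isGoodColoring_of_notMem (h : IsPendantRing G Y w) (hn : 4 ≤ n)
    (hf : IsGoodColoring (isolate G (ringSet Y)) f) {c : Bool}
    (hi : c ∉ allowedColors f w (Y i)) (hi' : c ∈ allowedColors f w (Y (i + 1))) :
    ∃ g : V → Option Bool, IsGoodColoring G g := by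
  have : NeZero n := ⟨by lia⟩
  obtain ⟨σ, hσ, hmem, hnone⟩ := exists_greedy (h.nonempty_allowedColors f) hi hi'
  choose y hy hyw using fun j => h.exists_mem_forall_ne_some (hmem j)
  have hw (j x) (hx : f x = none) (hj : σ j = none) (v) (hv : v ∈ Y j) : w v ≠ x := by
    rintro rfl
    obtain ⟨a, ha⟩ := hnone j hj
    exact ha ⟨v, hv, by simp [hx]⟩
  have h₁ := zmod_natCast_ne_zero (n := n) (k := 1) (by lia) (by lia)
  have hne (j) : y j ≠ y (j + 1) := fun he => h₁ (by
    push_cast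
    linear_combination -h.eq_of_mem (hy j) (he ▸ hy (j + 1)))
  exact h.exists_isGoodColoring_of_single hn hf hy hσ hyw
    (fun j x hx hj => ⟨y j, mem_union_left _ (hy j), hne j, hw j x hx hj _ (hy j)⟩)
    (fun j x hx hj => ⟨y (j + 1), mem_union_right _ (hy _), (hne j).symm, hw _ x hx hj _ (hy _)⟩)

theorem exists_isGoodColoring_of_not_apex (h : IsPendantRing G Y w) (hn : 4 ≤ n)
    (hf : IsGoodColoring (isolate G (ringSet Y)) f)
    (hall : ∀ i c, c ∈ allowedColors f w (Y i))
    (hi : ¬ HasUncoloredApex f w (Y (i - 1) ∪ Y i))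
    (hi' : ¬ HasUncoloredApex f w (Y i ∪ Y (i + 1))) :
    ∃ g : V → Option Bool, IsGoodColoring G g := by
  have : NeZero n := ⟨by lia⟩
  have h₁ := zmod_natCast_ne_zero (n := n) (k := 1) (by lia) (by lia)
  rw [Nat.cast_one] at h₁
  obtain ⟨σ, hσ, hne⟩ := exists_alternating (E := {i}) (by simp) (by simpa using h₁)
  have hy (j) : ∃ v ∈ Y j, (∀ c, σ j = some c → f (w v) ≠ some c) ∧
      (j = i + 1 ∨ j = i - 1 → ∀ x, f x = none → ∃ u ∈ Y i ∪ Y j, u ≠ v ∧ w u ≠ x) := by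
    cases hσj : σ j with
    | none =>
      obtain rfl : j = i := (hσ j).1 hσj
      obtain ⟨v, hv⟩ := h.nonempty j
      exact ⟨v, hv, by simp, by simp [h₁, eq_sub_iff_add_eq]⟩
    | some c =>
      by_cases hj : j = i + 1 ∨ j = i - 1
      · have hapex : ¬ HasUncoloredApex f w (Y i ∪ Y j) := by
          rcases hj with rfl | rfl
          exacts [hi', union_comm (Y i) _ ▸ hi]
        have hji : i ≠ j := by
          rintro rfl
          simp [h₁, eq_sub_iff_add_eq] at hj
        obtain ⟨v, hv, hvc, hvx⟩ := exists_mem_avoiding_apex (h.nonempty i)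
          (by simp [h.card_eq]) (h.disjoint i j hji) hapex (hall j c)
        exact ⟨v, hv, by simpa using hvc, fun _ => hvx⟩
      · obtain ⟨v, hv, hvc⟩ := hall j c
        exact ⟨v, hv, by simpa using hvc, fun hj' => (hj hj').elim⟩
  choose y hy hyw hyx using hy
  refine h.exists_isGoodColoring_of_single hn hf hy hne hyw (fun j x hx hj => ?_)
    (fun j x hx hj => ?_)
  · obtain rfl : j = i := (hσ j).1 hj
    exact hyx (j + 1) (Or.inl rfl) x hx
  · obtain rfl : j + 1 = i := (hσ _).1 hj
    rw [union_comm]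
    exact hyx j (Or.inr (by ring)) x hx

theorem exists_mem_union_ne_of_pendant (h : IsPendantRing G Y w) {j k : ZMod n} {x₀ u : V}
    (hj : ∀ v ∈ Y j, w v = x₀) (hk : ∀ v ∈ Y k, w v ≠ x₀) (hu : u ∈ Y k) (x : V) :
    ∃ v ∈ Y j ∪ Y k, v ≠ u ∧ w v ≠ x := by
  by_cases hx : x = x₀
  · obtain ⟨v, hv, hvu⟩ := Finset.exists_mem_ne (by rw [h.card_eq]; lia : 1 < #(Y k)) u
    exact ⟨v, mem_union_right _ hv, hvu, hx ▸ hk v hv⟩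
  · obtain ⟨v, hv⟩ := h.nonempty j
    exact ⟨v, mem_union_left _ hv, fun he => hk u hu (he ▸ hj v hv), hj v hv ▸ Ne.symm hx⟩

/-- Both vertices of the middle pair are coloured, with different colours; this is possible as
their common neighbour outside the ring is uncoloured. -/
theorem isRingPattern_of_apex (h : IsPendantRing G Y w) {x₀ : V} (hx₀ : f x₀ = none)
    (hw : ∀ v ∈ Y (i - 1) ∪ Y i ∪ Y (i + 1), w v = x₀)
    (hfar : ∀ v ∈ Y (i - 2) ∪ Y (i + 2), w v ≠ x₀)
    {y : ZMod n → V} {σ : ZMod n → Option Bool} {c : Bool} (hy : ∀ j, y j ∈ Y j)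
    (hyw : ∀ j a, σ j = some a → f (w (y j)) ≠ some a) (hne : ∀ j, σ j ≠ σ (j + 1))
    (hσ : ∀ j, σ j = none ↔ j = i - 1 ∨ j = i + 1) (hc : σ i = some c) :
    IsRingPattern Y w f y σ fun j => if j = i then some !c else none := by
  constructor
  case mem => exact hy
  case ne => exact hne
  case eq_none_of_eq =>
    intro j he
    by_cases hj : j = i <;> simp_all
  case eq_none_right =>
    intro j hj
    obtain rfl : j = i := by simpa using hj
    exact (hσ _).2 (Or.inr rfl)
  case eq_none_left =>
    intro j hj
    obtain rfl : j + 1 = i := by simpa using hj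
    exact (hσ _).2 (Or.inl (by ring))
  case pendant =>
    intro j he
    by_contra hne
    obtain ⟨a, ha⟩ := Option.ne_none_iff_exists'.1 hne
    exact hyw j a ha (he ▸ ha)
  case pendant' =>
    intro j v hv he
    by_cases hj : j = i
    · subst hj
      rwa [hw v (by simp [hv]), hx₀] at he
    · exact if_neg hj
  case triple_left =>
    intro j x _ hσj hτj
    have hj : j + 1 ≠ i := by simpa using hτj
    obtain rfl : j = i + 1 := ((hσ j).1 hσj).resolve_left fun he => hj (by rw [he]; ring)
    have hj' : i + 1 + 1 = i + 2 := by ring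
    exact h.exists_mem_union_ne_of_pendant (fun v hv => hw v (by simp [hv]))
      (fun v hv => hfar v (mem_union_right _ (hj' ▸ hv))) (hy _) x
  case triple_right =>
    intro j x _ hσj hτj
    have hj : j ≠ i := by simpa using hτj
    have hj' : j + 1 = i - 1 := ((hσ _).1 hσj).resolve_right fun he => hj (by simpa using he)
    obtain rfl : j = i - 2 := by linear_combination hj'
    rw [union_comm, hj']
    exact h.exists_mem_union_ne_of_pendant (fun v hv => hw v (by simp [hv]))
      (fun v hv => hfar v (mem_union_left _ hv)) (hy _) x

theorem exists_isGoodColoring_of_apex (h : IsPendantRing G Y w) (hn : 4 ≤ n)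
    (hf : IsGoodColoring (isolate G (ringSet Y)) f)
    (hall : ∀ i c, c ∈ allowedColors f w (Y i)) {x₀ : V} (hx₀ : f x₀ = none)
    (hw : ∀ v ∈ Y (i - 1) ∪ Y i ∪ Y (i + 1), w v = x₀)
    (hfar : ∀ v ∈ Y (i - 2) ∪ Y (i + 2), w v ≠ x₀) :
    ∃ g : V → Option Bool, IsGoodColoring G g := by
  have : NeZero n := ⟨by lia⟩
  obtain ⟨σ, hσ, hσi, hne⟩ := exists_alternating_around hn i
  obtain ⟨c, hc⟩ := Option.ne_none_iff_exists'.1 hσi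
  choose y hy hyw using fun j => h.exists_mem_forall_ne_some (o := σ j) fun a _ => hall j a
  exact (h.isRingPattern_of_apex hx₀ hw hfar hy hyw hne hσ hc).exists_isGoodColoring h hn hf

end IsPendantRing

namespace IsPendantRing

variable {V : Type*} {n : ℕ} {G : SimpleGraph V} {Y : ZMod n → Finset V} {w : V → V}
  {f : V → Option Bool} {i : ZMod n}

theorem pendant_ne_of_degree_le [Fintype V] (h : IsPendantRing G Y w) (hn : 3 ≤ n) {x₀ : V}
    (hdeg : G.degree x₀ ≤ 6) (hw : ∀ v ∈ Y (i - 1) ∪ Y i ∪ Y (i + 1), w v = x₀) {v : V}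
    (hvY : v ∈ ringSet Y) (hv : v ∉ Y (i - 1) ∪ Y i ∪ Y (i + 1)) : w v ≠ x₀ := by
  intro hwv
  have hadj (u) (hu : u ∈ ringSet Y) (hwu : w u = x₀) : u ∈ G.neighborFinset x₀ :=
    (G.mem_neighborFinset x₀ u).2 (hwu ▸ (h.adj _ u hu.choose_spec).symm)
  have hsub : insert v (Y (i - 1) ∪ Y i ∪ Y (i + 1)) ⊆ G.neighborFinset x₀ := by
    refine insert_subset (hadj v hvY hwv) fun u hu => hadj u ?_ (hw u hu)
    simp only [mem_union] at hu
    rcases hu with (hu | hu) | hu <;> exact ⟨_, hu⟩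
  have hle := card_le_card hsub
  rw [card_insert_of_notMem hv, card_three_consecutive h.card_eq h.disjoint hn,
    card_neighborFinset_eq_degree] at hle
  lia

theorem exists_isGoodColoring_of_adjacent_apex [Fintype V] (h : IsPendantRing G Y w) (hn : 5 ≤ n)
    (hdeg : ∀ v, G.degree v ≤ 6) (hf : IsGoodColoring (isolate G (ringSet Y)) f)
    (hall : ∀ i c, c ∈ allowedColors f w (Y i))
    (hi : HasUncoloredApex f w (Y (i - 1) ∪ Y i)) (hi' : HasUncoloredApex f w (Y i ∪ Y (i + 1))) :
    ∃ g : V → Option Bool, IsGoodColoring G g := by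
  obtain ⟨x, hx, hwx⟩ := hi
  obtain ⟨x', -, hwx'⟩ := hi'
  obtain ⟨v₀, hv₀⟩ := h.nonempty i
  obtain rfl : x = x' := (hwx v₀ (by simp [hv₀])).symm.trans (hwx' v₀ (by simp [hv₀]))
  have hw : ∀ v ∈ Y (i - 1) ∪ Y i ∪ Y (i + 1), w v = x := fun v hv => by
    rcases mem_union.1 hv with hv | hv
    exacts [hwx v hv, hwx' v (mem_union_right _ hv)]
  have h₁ := zmod_natCast_ne_zero (n := n) (k := 1) (by lia) (by lia)
  have h₂ := zmod_natCast_ne_zero (n := n) (k := 2) (by lia) (by lia)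
  have h₃ := zmod_natCast_ne_zero (n := n) (k := 3) (by lia) (by lia)
  push_cast at h₁ h₂ h₃
  refine h.exists_isGoodColoring_of_apex (by lia) hf hall hx hw fun v hv => ?_
  rcases mem_union.1 hv with hv | hv <;>
    refine h.pendant_ne_of_degree_le (by lia) (hdeg x) hw ⟨_, hv⟩ fun hmem => ?_ <;>
    simp only [mem_union] at hmem <;> rcases hmem with (hmem | hmem) | hmem <;>
    have he := h.eq_of_mem hv hmem
  exacts [h₁ (by linear_combination -he), h₂ (by linear_combination -he),
    h₃ (by linear_combination -he), h₃ (by linear_combination he),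
    h₂ (by linear_combination he), h₁ (by linear_combination he)]

theorem exists_isGoodColoring [Fintype V] (h : IsPendantRing G Y w) (hn : 5 ≤ n) (hodd : Odd n)
    (hdeg : ∀ v, G.degree v ≤ 6) (hf : IsGoodColoring (isolate G (ringSet Y)) f)
    (hallowed : ∀ c, ∃ i, c ∈ allowedColors f w (Y i)) :
    ∃ g : V → Option Bool, IsGoodColoring G g := by
  have : NeZero n := ⟨by lia⟩
  by_cases hall : ∀ i c, c ∈ allowedColors f w (Y i)
  · obtain ⟨i, hi⟩ := exists_iff_add_one hodd fun j => HasUncoloredApex f w (Y (j - 1) ∪ Y j)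
    rw [add_sub_cancel_right] at hi
    by_cases hap : HasUncoloredApex f w (Y (i - 1) ∪ Y i)
    · exact h.exists_isGoodColoring_of_adjacent_apex hn hdeg hf hall hap (hi.1 hap)
    · exact h.exists_isGoodColoring_of_not_apex (by lia) hf hall hap fun h' => hap (hi.2 h')
  push Not at hall
  obtain ⟨i, c, hic⟩ := hall
  obtain ⟨j, hj, hj'⟩ : ∃ j, c ∉ allowedColors f w (Y j) ∧ c ∈ allowedColors f w (Y (j + 1)) := by
    by_contra! hstep
    have hnone (k : ℕ) : c ∉ allowedColors f w (Y (i + k)) := by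
      induction k with
      | zero => simpa using hic
      | succ k ih => simpa [add_assoc] using hstep _ ih
    obtain ⟨j, hj⟩ := hallowed c
    exact hnone (j - i).val (by simpa using hj)
  exact h.exists_isGoodColoring_of_notMem (by lia) hf hj hj'

end IsPendantRing

/-! ### Replacing a ring of pairs by an edge -/

section Reduction

variable {V : Type*} {n t d : ℕ} {G : SimpleGraph V} {I S : Set V} {Y : ZMod n → Finset V}
  {w : V → V} {x y : V} {U : Finset V}

theorem IsCliqueRing.isPendantRing [Fintype V] (h : IsCliqueRing (isolate G I) Y) (hn : 3 ≤ n)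
    (hdeg : ∀ v, G.degree v ≤ 6) (hw : ∀ v ∉ I, w v ∈ I ∧ G.Adj v (w v)) :
    IsPendantRing G Y w := by
  have hY (i) (v) (hv : v ∈ Y i) : v ∉ I :=
    ((isNClique_isolate_iff (by lia)).1 (h.isNClique i)).2 (by simp [hv])
  have hcard := card_three_consecutive h.card_eq h.disjoint hn
  have hclosed (i) (v) (hv : v ∈ Y i) :
      insert v ((isolate G I).neighborFinset v) = Y (i - 1) ∪ Y i ∪ Y (i + 1) :=
    insert_neighborFinset_eq_union
      (degree_isolate_le (fun u hu => ⟨w u, hw u hu⟩) hdeg v) hv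
      (by simpa using (h.isNClique (i - 1)).isClique) (h.isNClique i).isClique (hcard i).ge
  refine ⟨h.card_eq, h.disjoint, fun i v hv ⟨j, hj⟩ => hY j _ hj (hw v (hY i v hv)).1,
    fun i v hv => (hw v (hY i v hv)).2, fun i v hv u hvu => ?_⟩
  obtain ⟨hwI, hvw⟩ := hw v (hY i v hv)
  have hsub : insert (w v) ((isolate G I).neighborFinset v) ⊆ G.neighborFinset v :=
    insert_subset ((G.mem_neighborFinset v _).2 hvw) fun z hz =>
      (G.mem_neighborFinset v z).2 ((mem_neighborFinset _ _ _).1 hz).1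
  have hnotMem : w v ∉ (isolate G I).neighborFinset v := fun hmem =>
    ((mem_neighborFinset (isolate G I) v _).1 hmem).2.2 hwI
  have heq := eq_of_subset_of_card_le hsub <| by
    have hcard' := congrArg card (hclosed i v hv)
    rw [card_insert_of_notMem (by simp), hcard i] at hcard'
    rw [card_insert_of_notMem hnotMem, hcard', card_neighborFinset_eq_degree]
    exact hdeg v
  have hu : u ∈ insert (w v) ((isolate G I).neighborFinset v) :=
    heq ▸ (G.mem_neighborFinset v u).2 hvu
  rw [← hclosed i v hv]
  exact (mem_insert.1 hu).symm.imp_left mem_insert_of_mem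

theorem cliqueFree_sup_edge_of_commonNeighbors (hxy : x ≠ y) (hfree : G.CliqueFree (t + 2))
    (h : G.CliqueFreeOn (G.commonNeighbors x y) t) : (G ⊔ edge x y).CliqueFree (t + 2) := by
  intro Q hQ
  have hQ' : (G ⊔ edge y x).IsNClique (t + 2) Q := edge_comm x y ▸ hQ
  have hx := hfree.mem_of_sup_edge_isNClique hQ
  have hy := hfree.mem_of_sup_edge_isNClique hQ'
  have hQx := hQ.erase_of_sup_edge_of_mem hx
  have hQy := hQ'.erase_of_sup_edge_of_mem hy
  have hyQ : y ∈ Q.erase x := mem_erase.2 ⟨hxy.symm, hy⟩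
  refine h (fun q hq => ?_) (hQx.erase_of_mem hyQ)
  simp only [coe_erase, Set.mem_sdiff, Set.mem_singleton_iff, mem_coe] at hq
  exact ⟨hQy.isClique (by simp [hx, hxy]) (by simp [hq]) (Ne.symm hq.1.2),
    hQx.isClique hyQ (by simp [hq]) (Ne.symm hq.2)⟩

theorem degree_sup_edge_le [Fintype V] (hx : G.degree x < d) (hy : G.degree y < d)
    (hdeg : ∀ v, G.degree v ≤ d) (v : V) : (G ⊔ edge x y).degree v ≤ d := by
  rw [← card_neighborFinset_eq_degree] at hx hy ⊢
  have hinsert (z) (hz : #(G.neighborFinset v) < d)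
      (hsub : (G ⊔ edge x y).neighborFinset v ⊆ insert z (G.neighborFinset v)) :
      #((G ⊔ edge x y).neighborFinset v) ≤ d :=
    (card_le_card hsub).trans ((card_insert_le _ _).trans hz)
  by_cases hvx : v = x
  · subst hvx
    refine hinsert y hx fun u => ?_
    simp only [mem_insert, mem_neighborFinset, sup_adj, edge_adj]
    grind
  by_cases hvy : v = y
  · subst hvy
    refine hinsert x hy fun u => ?_
    simp only [mem_insert, mem_neighborFinset, sup_adj, edge_adj]
    grind
  refine (card_le_card fun u hu => ?_).trans (hdeg v)
  simpa [edge_adj, hvx, hvy] using hu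

theorem inter_inter_nonempty_of_card_lt {A B C T : Finset V} (hA : A ⊆ T) (hB : B ⊆ T)
    (hC : C ⊆ T) (hcard : 2 * #T < #A + #B + #C) : (A ∩ B ∩ C).Nonempty := by
  have hAB := card_union_add_card_inter A B
  have hABC := card_union_add_card_inter (A ∩ B) C
  have := card_le_card (union_subset hA hB)
  have := card_le_card (union_subset (inter_subset_left.trans hA : A ∩ B ⊆ T) hC)
  rw [← card_pos]
  lia

/-- Otherwise three of the resulting `4`-cliques in the neighbourhood of `x` share a vertex, whose
degree is then too large. -/
theorem exists_cliqueFreeOn_commonNeighbors [Fintype V] (hx : G.degree x ≤ 5)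
    (hdeg : ∀ v, G.degree v ≤ 6) (hxU : x ∉ U) (hU : 3 ≤ #U) (hadj : ∀ u ∈ U, ¬ G.Adj x u) :
    ∃ u ∈ U, G.CliqueFreeOn (G.commonNeighbors x u) 4 := by
  by_contra! h
  have hQ (u) (hu : u ∈ U) : ∃ Q : Finset V, (Q : Set V) ⊆ G.commonNeighbors x u ∧
      G.IsNClique 4 Q := by
    simpa [CliqueFreeOn] using h u hu
  choose! Q hQadj hQ using hQ
  have hQx (u) (hu : u ∈ U) : Q u ⊆ G.neighborFinset x := fun q hq =>
    (G.mem_neighborFinset x q).2 (hQadj u hu hq).1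
  obtain ⟨W, hWU, hW⟩ := exists_subset_card_eq hU
  obtain ⟨a, b, c, hab, hac, hbc, rfl⟩ := card_eq_three.1 hW
  have ha : a ∈ U := hWU (by simp)
  have hb : b ∈ U := hWU (by simp)
  have hc : c ∈ U := hWU (by simp)
  obtain ⟨q, hq⟩ := inter_inter_nonempty_of_card_lt (hQx a ha) (hQx b hb) (hQx c hc) (by
    rw [(hQ a ha).card_eq, (hQ b hb).card_eq, (hQ c hc).card_eq, card_neighborFinset_eq_degree]
    lia)
  simp only [mem_inter] at hq
  have hsub : insert x {a, b, c} ∪ (Q a).erase q ⊆ G.neighborFinset q := by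
    intro v hv
    rw [mem_neighborFinset]
    simp only [mem_union, mem_insert, mem_singleton, mem_erase] at hv
    rcases hv with (rfl | rfl | rfl | rfl) | ⟨hvq, hv⟩
    · exact (hQadj a ha hq.1.1).1.symm
    · exact (hQadj v ha hq.1.1).2.symm
    · exact (hQadj v hb hq.1.2).2.symm
    · exact (hQadj v hc hq.2).2.symm
    · exact (hQ a ha).isClique hq.1.1 hv hvq.symm
  have hdisj : Disjoint (insert x {a, b, c}) ((Q a).erase q) := by
    refine disjoint_left.2 fun v hv hvQ => ?_
    have hxv : G.Adj x v := (hQadj a ha (mem_of_mem_erase hvQ)).1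
    rcases mem_insert.1 hv with rfl | hv
    exacts [hxv.ne rfl, hadj v (hWU hv) hxv]
  have hle := card_le_card hsub
  rw [card_union_of_disjoint hdisj, card_insert_of_notMem fun hx => hxU (hWU hx), hW,
    card_erase_of_mem hq.1.1, (hQ a ha).card_eq, card_neighborFinset_eq_degree] at hle
  have := hdeg q
  lia

theorem cliqueFreeOn_neighborSet_isolate [Fintype V] {F : Finset V} (hF : ∀ v ∈ F, G.Adj x v)
    (hdeg : G.degree x < t + #F) (hFS : (F : Set V) ⊆ S) :
    (isolate G S).CliqueFreeOn ((isolate G S).neighborSet x) t := by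
  intro Q hQx hQ
  have hdisj : Disjoint Q F := disjoint_left.2 fun v hv hvF => (hQx hv).2.2 (hFS hvF)
  have hsub : Q ∪ F ⊆ G.neighborFinset x := union_subset
    (fun v hv => (G.mem_neighborFinset x v).2 (hQx hv).1)
    (fun v hv => (G.mem_neighborFinset x v).2 (hF v hv))
  have hle := card_le_card hsub
  rw [card_union_of_disjoint hdisj, hQ.card_eq, card_neighborFinset_eq_degree] at hle
  lia

section Fibers

variable [Fintype V] {F : Finset V} (hdeg : ∀ v, G.degree v ≤ 6) (hF : 7 ≤ #F)
  (hadj : ∀ v ∈ F, G.Adj (w v) v)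

include hdeg hF hadj

theorem exists_pair_of_three_le_fiber {a : V} (hfiber : 3 ≤ #{v ∈ F | w v = w a}) :
    ∃ b ∈ F, w a ≠ w b ∧
      (isolate G F).CliqueFreeOn ((isolate G F).commonNeighbors (w a) (w b)) 4 := by
  obtain ⟨b, hb, hab⟩ : ∃ b ∈ F, w a ≠ w b := by
    by_contra! hconst
    have hsub : F ⊆ G.neighborFinset (w a) := fun v hv =>
      (G.mem_neighborFinset _ v).2 (hconst v hv ▸ hadj v hv)
    have hle := card_le_card hsub
    rw [card_neighborFinset_eq_degree] at hle
    have := hdeg (w a)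
    lia
  have hfree := cliqueFreeOn_neighborSet_isolate (t := 4) (S := F) (x := w a)
    (F := {v ∈ F | w v = w a})
    (fun v hv => (mem_filter.1 hv).2 ▸ hadj v (mem_filter.1 hv).1)
    (by have := hdeg (w a); lia) (coe_subset.2 (filter_subset _ _))
  exact ⟨b, hb, hab, CliqueFreeOn.subset _ Set.inter_subset_left hfree⟩

theorem exists_pair_of_fiber_lt_three (hfiber : ∀ a ∈ F, #{v ∈ F | w v = w a} < 3)
    (hindep : ∀ u ∈ F, ∀ v ∈ F, ¬ G.Adj (w u) (w v)) : ∃ a ∈ F, ∃ b ∈ F, w a ≠ w b ∧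
      (isolate G F).CliqueFreeOn ((isolate G F).commonNeighbors (w a) (w b)) 4 := by
  have himage : #F ≤ 2 * #(F.image w) := card_le_mul_card_image F 2 fun x hx => by
    obtain ⟨a, ha, rfl⟩ := mem_image.1 hx
    exact Nat.le_of_lt_succ (hfiber a ha)
  obtain ⟨a, ha⟩ : F.Nonempty := card_pos.1 (by lia)
  obtain ⟨x, hx, hfree⟩ := exists_cliqueFreeOn_commonNeighbors (G := isolate G F) (x := w a)
    (U := (F.image w).erase (w a))
    (Nat.le_of_lt_succ ((degree_isolate_lt (mem_coe.2 ha) (hadj a ha)).trans_le (hdeg (w a))))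
    (fun v => (degree_le_of_le isolate_le).trans (hdeg v)) (by simp)
    (by rw [card_erase_of_mem (mem_image_of_mem w ha)]; lia) fun x hx hax => by
      obtain ⟨b, hb, rfl⟩ := mem_image.1 (mem_of_mem_erase hx)
      exact hindep a ha b hb hax.1
  obtain ⟨hxa, hx⟩ := mem_erase.1 hx
  obtain ⟨b, hb, rfl⟩ := mem_image.1 hx
  exact ⟨a, ha, b, hb, hxa.symm, hfree⟩

end Fibers

/-- A reduction of the pendant ring `Y` in `G`: delete the ring and join two distinct outer
neighbours of it. -/
def ringReduction (G : SimpleGraph V) (Y : ZMod n → Finset V) (x y : V) : SimpleGraph V :=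
  isolate G (ringSet Y) ⊔ edge x y

theorem IsPendantRing.exists_cliqueFree_reduction [Fintype V] (h : IsPendantRing G Y w)
    (hn : 4 ≤ n) (hdeg : ∀ v, G.degree v ≤ 6) (hfree : G.CliqueFree 6)
    (hindep : ∀ u ∈ ringSet Y, ∀ v ∈ ringSet Y, ¬ G.Adj (w u) (w v)) :
    ∃ a ∈ ringSet Y, ∃ b ∈ ringSet Y, w a ≠ w b ∧
      (ringReduction G Y (w a) (w b)).CliqueFree 6 := by
  have : NeZero n := ⟨by lia⟩
  obtain ⟨F, hF⟩ : ∃ F, F = univ.biUnion Y := ⟨_, rfl⟩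
  have hring : ringSet Y = F := by ext v; simp [ringSet, hF]
  have hmem (v) : v ∈ ringSet Y ↔ v ∈ F := by rw [hring, mem_coe]
  have hcard : 7 ≤ #F := by
    rw [hF, card_biUnion fun i _ j _ hij => h.disjoint i j hij,
      sum_congr rfl fun i _ => h.card_eq i, sum_const, card_univ, ZMod.card, smul_eq_mul]
    lia
  have hadj (v) (hv : v ∈ F) : G.Adj (w v) v := by
    obtain ⟨i, hi⟩ := (hmem v).2 hv
    exact (h.adj i v hi).symm
  simp only [ringReduction, hmem] at hindep ⊢
  rw [hring]
  suffices ∃ a ∈ F, ∃ b ∈ F, w a ≠ w b ∧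
      (isolate G F).CliqueFreeOn ((isolate G F).commonNeighbors (w a) (w b)) 4 by
    obtain ⟨a, ha, b, hb, hab, hQ⟩ := this
    exact ⟨a, ha, b, hb, hab, cliqueFree_sup_edge_of_commonNeighbors hab
      (hfree.anti isolate_le) hQ⟩
  by_cases hfiber : ∀ a ∈ F, #{v ∈ F | w v = w a} < 3
  · exact exists_pair_of_fiber_lt_three hdeg hcard hadj hfiber hindep
  · push Not at hfiber
    obtain ⟨a, ha, hfiber⟩ := hfiber
    exact ⟨a, ha, exists_pair_of_three_le_fiber hdeg hcard hadj hfiber⟩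

theorem IsPendantRing.degree_ringReduction_le [Fintype V] (h : IsPendantRing G Y w) {a b : V}
    (ha : a ∈ ringSet Y) (hb : b ∈ ringSet Y) (hdeg : ∀ v, G.degree v ≤ d) (v : V) :
    (ringReduction G Y (w a) (w b)).degree v ≤ d := by
  have hlt (a) (ha : a ∈ ringSet Y) : (isolate G (ringSet Y)).degree (w a) < d := by
    obtain ⟨i, hi⟩ := ha
    exact (degree_isolate_lt (S := ringSet Y) ⟨i, hi⟩ (h.adj i a hi).symm).trans_le (hdeg _)
  unfold ringReduction
  convert degree_sup_edge_le (hlt a ha) (hlt b hb)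
    (fun u => (degree_le_of_le isolate_le).trans (hdeg u)) v

theorem IsPendantRing.support_ringReduction_ssubset (h : IsPendantRing G Y w) {a b : V}
    (ha : a ∈ ringSet Y) (hb : b ∈ ringSet Y) :
    (ringReduction G Y (w a) (w b)).support ⊂ G.support := by
  obtain ⟨i, hi⟩ := ha
  obtain ⟨j, hj⟩ := hb
  have hai := h.adj i a hi
  have hbj := h.adj j b hj
  refine (Set.ssubset_iff_of_subset ?_).2 ⟨a, ⟨w a, hai⟩, ?_⟩
  · rintro v ⟨u, hvu⟩
    rcases hvu with hvu | hvu
    · exact ⟨u, hvu.1⟩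
    · rw [edge_adj] at hvu
      rcases hvu.1 with ⟨rfl, rfl⟩ | ⟨rfl, rfl⟩
      exacts [⟨a, hai.symm⟩, ⟨b, hbj.symm⟩]
  · rintro ⟨u, hau⟩
    rcases hau with hau | hau
    · exact hau.2.1 ⟨i, hi⟩
    · rw [edge_adj] at hau
      rcases hau.1 with ⟨he, -⟩ | ⟨he, -⟩
      exacts [h.notMem i a hi (he ▸ ⟨i, hi⟩), h.notMem j b hj (he ▸ ⟨i, hi⟩)]

theorem exists_mem_allowedColors {α : Type*} {f : V → Option α} {a b : V}
    (hf : IsGoodColoring (ringReduction G Y (w a) (w b)) f) (ha : a ∈ ringSet Y)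
    (hb : b ∈ ringSet Y) (hab : w a ≠ w b) (c : α) : ∃ i, c ∈ allowedColors f w (Y i) := by
  obtain ⟨i, hi⟩ := ha
  obtain ⟨j, hj⟩ := hb
  by_contra! hnone
  have hac : f (w a) = some c := by_contra fun hne => hnone i ⟨a, hi, hne⟩
  have hbc : f (w b) = some c := by_contra fun hne => hnone j ⟨b, hj, hne⟩
  have hadj : (ringReduction G Y (w a) (w b)).Adj (w a) (w b) :=
    Or.inr ((edge_adj _ _ _ _).2 ⟨Or.inl ⟨rfl, rfl⟩, hab⟩)
  simpa [hac] using hf.eq_none_of_adj _ _ hadj (hac.trans hbc.symm)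

end Reduction

/-! ### Colouring and partitioning -/

section Existence

variable {V : Type*} [Fintype V] {G : SimpleGraph V} {d : ℕ}

theorem IsCliqueRing.exists_isPendantRing {n : ℕ} {I : Set V} {Y : ZMod n → Finset V}
    (h : IsCliqueRing (isolate G I) Y) (hn : 4 ≤ n) (hdeg : ∀ v, G.degree v ≤ 6)
    (hfree : G.CliqueFree 6) (hI : G.IsIndepSet I) (hdom : ∀ v ∉ I, ∃ u ∈ I, G.Adj v u) :
    ∃ w, IsPendantRing G Y w ∧ ∃ a ∈ ringSet Y, ∃ b ∈ ringSet Y, w a ≠ w b ∧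
      (ringReduction G Y (w a) (w b)).CliqueFree 6 := by
  choose! w hw using hdom
  have hring := h.isPendantRing (by lia) hdeg hw
  have hwI (v) (hv : v ∈ ringSet Y) : w v ∈ I := by
    obtain ⟨i, hi⟩ := hv
    exact (hw v (((isNClique_isolate_iff (by lia)).1 (h.isNClique i)).2 (by simp [hi]))).1
  exact ⟨w, hring, hring.exists_cliqueFree_reduction hn hdeg hfree fun u hu v hv huv =>
    hI (hwI u hu) (hwI v hv) huv.ne huv⟩

theorem exists_isGoodColoring_of_degree_le_six (hdeg : ∀ v, G.degree v ≤ 6)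
    (hfree : G.CliqueFree 6) : ∃ g : V → Option Bool, IsGoodColoring G g := by
  induction hs : G.support.ncard using Nat.strong_induction_on generalizing G with | _ s ih
  subst hs
  obtain ⟨J, hJ, hJfree⟩ := exists_isIndepSet_cliqueFreeOn_compl_of_five_le hfree hdeg le_rfl
  obtain ⟨I, hJI, hI, hdom⟩ := exists_isIndepSet_dominating hJ
  by_cases hring : ∀ n, Odd n → 5 ≤ n → ∀ Y : ZMod n → Finset V, ¬ IsCliqueRing (isolate G I) Y
  · obtain ⟨K, hK, hKfree⟩ := exists_isIndepSet_cliqueFreeOn_compl_four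
      (degree_isolate_le hdom hdeg) (cliqueFree_isolate (by lia)
        (CliqueFreeOn.subset _ (Set.compl_subset_compl.2 hJI) hJfree)) hring
    have hf := IsGoodColoring.of_cliqueFree (α := Empty) (cliqueFree_isolate (by lia) hKfree)
    exact ((hf.insertColor hK).insertColor hI).exists_of_card_le (by simp)
  · push Not at hring
    obtain ⟨n, hodd, hn, Y, hY⟩ := hring
    obtain ⟨w, hw, a, ha, b, hb, hab, hred⟩ :=
      hY.exists_isPendantRing (by lia) hdeg hfree hI hdom
    obtain ⟨f, hf⟩ := ih _ (Set.ncard_lt_ncard (hw.support_ringReduction_ssubset ha hb))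
      (hw.degree_ringReduction_le ha hb hdeg) hred rfl
    exact hw.exists_isGoodColoring hn hodd hdeg (hf.anti le_sup_left)
      (exists_mem_allowedColors hf ha hb hab)

theorem exists_isGoodColoring (hd : 2 ≤ d) (hdeg : ∀ v, G.degree v ≤ d + 4)
    (hfree : G.CliqueFree (d + 4)) : ∃ g : V → Option (Fin d), IsGoodColoring G g := by
  induction d, hd using Nat.le_induction generalizing G with
  | base =>
    obtain ⟨f, hf⟩ := exists_isGoodColoring_of_degree_le_six hdeg hfree
    exact hf.exists_of_card_le (by simp)
  | succ d hd ih =>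
    rw [Nat.add_right_comm] at hdeg hfree
    obtain ⟨J, hJ, hJfree⟩ :=
      exists_isIndepSet_cliqueFreeOn_compl_of_five_le hfree hdeg (by lia)
    obtain ⟨I, hJI, hI, hdom⟩ := exists_isIndepSet_dominating hJ
    obtain ⟨f, hf⟩ := ih (degree_isolate_le hdom hdeg) (cliqueFree_isolate (by lia)
      (CliqueFreeOn.subset _ (Set.compl_subset_compl.2 hJI) hJfree))
    exact (hf.insertColor hI).exists_of_card_le (by simp)

end Existence

section Partition

variable {V α : Type*} {G : SimpleGraph V} {f : V → Option α} {C : Finset α} {Q : Finset V}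

theorem IsGoodColoring.card_filter_eq_none_le (hf : IsGoodColoring G f)
    (hQ : G.IsClique (Q : Set V)) : #{v ∈ Q | f v = none} ≤ 3 := by
  by_contra! hcard
  obtain ⟨R, hR, hR4⟩ := exists_subset_card_eq (Nat.succ_le_of_lt hcard)
  exact hf.cliqueFreeOn (fun v hv => (mem_filter.1 (hR hv)).2)
    ⟨hQ.subset (coe_subset.2 (hR.trans (filter_subset _ _))), hR4⟩

theorem IsGoodColoring.card_filter_ne_none_le (hf : IsGoodColoring G f)
    (hQ : G.IsClique (Q : Set V)) (hC : ∀ v ∈ Q, ∀ c, f v = some c → c ∈ C) :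
    #{v ∈ Q | f v ≠ none} ≤ #C := by
  rw [← card_map (Function.Embedding.some (α := α))]
  refine card_le_card_of_injOn f (fun v hv => ?_) fun u hu v hv he => by_contra fun huv => ?_
  · obtain ⟨hvQ, hv⟩ := mem_filter.1 hv
    obtain ⟨c, hc⟩ := Option.ne_none_iff_exists'.1 hv
    exact mem_map.2 ⟨c, hC v hvQ c hc, hc.symm⟩
  · obtain ⟨huQ, hu⟩ := mem_filter.1 hu
    exact hu (hf.eq_none_of_adj u v (hQ huQ (mem_filter.1 hv).1 huv) he)

theorem IsGoodColoring.card_clique_le (hf : IsGoodColoring G f)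
    (hQ : G.IsClique (Q : Set V)) (hC : ∀ v ∈ Q, ∀ c, f v = some c → c ∈ C) :
    #Q ≤ 3 + #C := by
  rw [← card_filter_add_card_filter_not (s := Q) (f · = none)]
  exact add_le_add (hf.card_filter_eq_none_le hQ) (hf.card_filter_ne_none_le hQ hC)

theorem IsGoodColoring.exists_partition {ι : Type*} {q : ι → ℕ} {f : V → Option (Σ i, Fin (q i))}
    (hf : IsGoodColoring G f) (i₀ : ι) : ∃ P : ι → Set V, (∀ x, ∃! i, x ∈ P i) ∧
      ∀ i, G.CliqueFreeOn (P i) (q i + if i = i₀ then 4 else 1) := by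
  refine ⟨fun i => {v | (f v).elim i₀ Sigma.fst = i}, fun x => existsUnique_eq',
    fun i Q hQi hQ => ?_⟩
  have hC : ∀ v ∈ Q, ∀ c, f v = some c → c ∈ univ.map (Function.Embedding.sigmaMk i) := by
    rintro v hv ⟨j, c⟩ hc
    obtain rfl : j = i := by simpa [hc] using hQi hv
    simp
  have hcard := hQ.card_eq
  split_ifs at hcard with hi
  · have := hf.card_clique_le hQ.isClique hC
    simp only [card_map, card_univ, Fintype.card_fin] at this
    lia
  · have hcolored (v) (hv : v ∈ Q) : f v ≠ none := fun hnone =>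
      hi (by simpa [hnone] using (hQi hv).symm)
    have := hf.card_filter_ne_none_le hQ.isClique hC
    rw [filter_true_of_mem hcolored, card_map, card_univ, Fintype.card_fin] at this
    lia

end Partition

end CliqueFreePartition

open CliqueFreePartition in
theorem statement0_general {V ι : Type*} [Fintype V] [Fintype ι] (H : SimpleGraph V)
    [DecidableRel H.Adj] {D : ℕ} (hD : 6 ≤ D) (hdeg : ∀ v, H.degree v ≤ D)
    (hfree : H.CliqueFree D) (p : ι → ℕ) (hp : ∀ i, 1 ≤ p i) (i₀ : ι) (hp₀ : 4 ≤ p i₀)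
    (hsum : ∑ i, p i = D - 1 + Fintype.card ι) :
    ∃ P : ι → Set V, (∀ x, ∃! i, x ∈ P i) ∧ ∀ i, H.CliqueFreeOn (P i) (p i) := by
  classical
  obtain ⟨d, rfl⟩ := Nat.exists_eq_add_of_le' (show 4 ≤ D by lia)
  obtain ⟨q, rfl⟩ : ∃ q : ι → ℕ, p = fun i => q i + if i = i₀ then 4 else 1 :=
    ⟨fun i => p i - if i = i₀ then 4 else 1, funext fun i =>
      (Nat.sub_add_cancel (by split_ifs with hi; exacts [hi ▸ hp₀, hp i])).symm⟩
  have hcolors : Fintype.card (Σ i, Fin (q i)) = d := by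
    have hite (i) : (if i = i₀ then 4 else 1) = (if i = i₀ then 3 else 0) + 1 := by
      split_ifs <;> rfl
    simp only [hite, Finset.sum_add_distrib, Finset.sum_ite_eq', Finset.mem_univ, if_true,
      Finset.sum_const, Finset.card_univ, smul_eq_mul, mul_one] at hsum
    rw [Fintype.card_sigma]
    simp only [Fintype.card_fin]
    lia
  obtain ⟨f, hf⟩ := exists_isGoodColoring (d := d) (by lia) (fun v => by convert hdeg v) hfree
  obtain ⟨g, hg⟩ := hf.exists_of_card_le (β := Σ i, Fin (q i)) (by simp [hcolors])
  exact hg.exists_partition i₀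

/-- **Theorem (analogue of Borodin–Kostochka).**
Let `H` be a finite simple graph with maximum degree `Δ(H) ≥ 6` and clique number
`ω(H) ≤ Δ(H) − 1`. Let `k ≥ 1` and let `p 0 ≥ p 1 ≥ … ≥ p (k-1) ≥ 2` be positive
integers with `p 0 ≥ 4` and `∑ i, p i = Δ(H) − 1 + k`. Then `V(H)` can be partitioned
into sets `P 0, …, P (k-1)` such that each induced subgraph `H[P i]` is `K_{p i}`-free. -/
theorem statement0 {V : Type*} [Fintype V] (H : SimpleGraph V) [DecidableRel H.Adj]
    (hΔ : 6 ≤ H.maxDegree) (hω : H.cliqueNum ≤ H.maxDegree - 1)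
    (k : ℕ) (hk : 1 ≤ k) (p : Fin k → ℕ)
    (hmono : ∀ i j : Fin k, i ≤ j → p j ≤ p i)
    (hp2 : ∀ i, 2 ≤ p i) (hp4 : 4 ≤ p ⟨0, hk⟩)
    (hsum : ∑ i, p i = H.maxDegree - 1 + k) :
    ∃ P : Fin k → Set V,
      (∀ x : V, ∃! i, x ∈ P i) ∧
      ∀ i, H.CliqueFreeOn (P i) (p i) := by
  refine statement0_general H hΔ H.degree_le_maxDegree (fun Q hQ => ?_) p
    (fun i => one_le_two.trans (hp2 i)) ⟨0, hk⟩ hp4 (by rw [hsum, Fintype.card_fin])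
  have := hQ.card_eq ▸ hQ.isClique.card_le_cliqueNum
  lia
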